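/- arXiv:2001.06436 — 10 statements merged into one kernel-verified Lean document; each statement's English description precedes it below -/
import Mathlib

section
/- Let Γ and Ω be two non-parallel affine planes in ℝ³, let p be a point lying on neither plane, and let Π be the unique affine plane through p parallel to Ω. Then the set of vanishing points of Γ (with respect to the central projection from Γ to Ω through p) equals the intersection Γ ∩ Π; in particular, this set is an affine line, so all vanishing points of Γ are collinear. -/
noncomputable section

/-- Points of `ℝ³`. -/
abbrev E3 : Type := Fin 3 → ℝ

/-- An affine plane in `ℝ³`: a nonempty affine subspace whose direction has dimension 2. -/
def IsPlane (s : AffineSubspace ℝ E3) : Prop :=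
  (s : Set E3).Nonempty ∧ Module.finrank ℝ s.direction = 2

/-- An affine line in `ℝ³`: a nonempty affine subspace whose direction has dimension 1. -/
def IsLine (s : AffineSubspace ℝ E3) : Prop :=
  (s : Set E3).Nonempty ∧ Module.finrank ℝ s.direction = 1

/-- `v` is a vanishing point of the plane `Γ` with respect to the central projection from
`Γ` to `Ω` through `p`: it lies in `Γ` and the line through `p` and `v` is parallel to `Ω`. -/
def VanishingPt (Γ Ω : AffineSubspace ℝ E3) (p v : E3) : Prop :=
  v ∈ Γ ∧ v -ᵥ p ∈ Ω.direction

section Hyperplane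

open Module

variable {k V : Type*} [DivisionRing k] [AddCommGroup V] [Module k V]

theorem isCoatom_iff_finrank_add_one_eq [FiniteDimensional k V] {W : Submodule k V} :
    IsCoatom W ↔ finrank k W + 1 = finrank k V := by
  rw [← isSimpleModule_iff_isCoatom, isSimpleModule_iff_finrank_eq_one,
    ← W.finrank_quotient_add_finrank]
  omega

theorem finrank_inf_add_one_eq_of_isCoatom {U W : Submodule k V} [FiniteDimensional k U]
    (hW : IsCoatom W) (hUW : ¬ U ≤ W) : finrank k ↥(U ⊓ W) + 1 = finrank k U := by
  have hcomap : IsCoatom (W.comap U.subtype) :=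
    (Submodule.isCoatom_comap_or_eq_top U.subtype hW).resolve_right
      (mt Submodule.comap_subtype_eq_top.mp hUW)
  rw [← Submodule.map_comap_subtype, Submodule.finrank_map_subtype_eq]
  exact isCoatom_iff_finrank_add_one_eq.mp hcomap

variable {P : Type*} [AddTorsor V P]

theorem inf_mk'_nonempty_of_isCoatom {Γ : AffineSubspace k P} {W : Submodule k V}
    (hΓ : (Γ : Set P).Nonempty) (hW : IsCoatom W) (hΓW : ¬ Γ.direction ≤ W) (p : P) :
    ((Γ ⊓ AffineSubspace.mk' p W : AffineSubspace k P) : Set P).Nonempty :=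
  AffineSubspace.inter_nonempty_of_nonempty_of_sup_direction_eq_top hΓ
    (AffineSubspace.mk'_nonempty p W) <| by
      rw [AffineSubspace.direction_mk']
      exact hW.2 _ (right_lt_sup.mpr hΓW)

theorem finrank_direction_inf_mk'_add_one_eq_of_isCoatom {Γ : AffineSubspace k P}
    [FiniteDimensional k Γ.direction] {W : Submodule k V}
    (hΓ : (Γ : Set P).Nonempty) (hW : IsCoatom W) (hΓW : ¬ Γ.direction ≤ W) (p : P) :
    finrank k (Γ ⊓ AffineSubspace.mk' p W).direction + 1 = finrank k Γ.direction := by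
  obtain ⟨q, hq⟩ := inf_mk'_nonempty_of_isCoatom hΓ hW hΓW p
  rw [AffineSubspace.direction_inf_of_mem_inf hq, AffineSubspace.direction_mk']
  exact finrank_inf_add_one_eq_of_isCoatom hW hΓW

theorem collinear_of_finrank_direction_eq_one {s : AffineSubspace k P}
    (hs : finrank k s.direction = 1) : Collinear k (s : Set P) :=
  have : FiniteDimensional k (vectorSpan k (s : Set P)) := .of_finrank_eq_succ hs
  collinear_iff_finrank_le_one.mpr hs.le

/-- The hyperplane `Ω` is given by `IsCoatom Ω.direction`, which allows `V` to be
infinite-dimensional. -/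
theorem vanishing_set_eq_inter_and_is_line_general (Γ Ω : AffineSubspace k P) (p : P)
    (hΓ : (Γ : Set P).Nonempty) (hΓ_two : finrank k Γ.direction = 2)
    (hΩ : IsCoatom Ω.direction) (hΓΩ : ¬ Γ.direction ≤ Ω.direction) :
    {v : P | v ∈ Γ ∧ v -ᵥ p ∈ Ω.direction} = ↑(Γ ⊓ AffineSubspace.mk' p Ω.direction) ∧
      (((Γ ⊓ AffineSubspace.mk' p Ω.direction : AffineSubspace k P) : Set P).Nonempty ∧
        finrank k (Γ ⊓ AffineSubspace.mk' p Ω.direction).direction = 1) ∧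
      Collinear k {v : P | v ∈ Γ ∧ v -ᵥ p ∈ Ω.direction} := by
  have : FiniteDimensional k Γ.direction := .of_finrank_eq_succ hΓ_two
  have hset : {v : P | v ∈ Γ ∧ v -ᵥ p ∈ Ω.direction} =
      ↑(Γ ⊓ AffineSubspace.mk' p Ω.direction) := by
    ext v
    rw [SetLike.mem_coe, AffineSubspace.mem_inf_iff, AffineSubspace.mem_mk', Set.mem_ofPred_eq]
  have hdim : finrank k (Γ ⊓ AffineSubspace.mk' p Ω.direction).direction = 1 := by
    have := finrank_direction_inf_mk'_add_one_eq_of_isCoatom hΓ hΩ hΓΩ p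
    omega
  exact ⟨hset, ⟨inf_mk'_nonempty_of_isCoatom hΓ hΩ hΓΩ p, hdim⟩,
    hset ▸ collinear_of_finrank_direction_eq_one hdim⟩

end Hyperplane

theorem IsPlane.isCoatom_direction {s : AffineSubspace ℝ E3} (hs : IsPlane s) :
    IsCoatom s.direction :=
  isCoatom_iff_finrank_add_one_eq.mpr (by rw [hs.2, Module.finrank_fin_fun])

theorem IsPlane.direction_eq_of_le {s t : AffineSubspace ℝ E3} (hs : IsPlane s) (ht : IsPlane t)
    (hst : s.direction ≤ t.direction) : s.direction = t.direction :=
  Submodule.eq_of_le_of_finrank_eq hst (hs.2.trans ht.2.symm)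

/-- The set of vanishing points of `Γ` (w.r.t. the central projection from `Γ` to `Ω`
through `p`) equals `Γ ∩ Π`, where `Π` is the plane through `p` parallel to `Ω`; in
particular this set is an affine line, so all vanishing points of `Γ` are collinear. -/
theorem vanishing_set_eq_inter_and_is_line
    (Γ Ω : AffineSubspace ℝ E3) (p : E3)
    (hΓ : IsPlane Γ) (hΩ : IsPlane Ω)
    (hnp : Γ.direction ≠ Ω.direction)
    (hpΓ : p ∉ Γ) (hpΩ : p ∉ Ω) :
    {v : E3 | VanishingPt Γ Ω p v} =
        ↑(Γ ⊓ AffineSubspace.mk' p Ω.direction) ∧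
      IsLine (Γ ⊓ AffineSubspace.mk' p Ω.direction) ∧
      Collinear ℝ {v : E3 | VanishingPt Γ Ω p v} :=
  vanishing_set_eq_inter_and_is_line_general Γ Ω p hΓ.1 hΓ.2 hΩ.isCoatom_direction
    (mt (hΓ.direction_eq_of_le hΩ) hnp)
end
end

section
/- Let Γ and Ω be two non-parallel affine planes in ℝ³, let p be a point lying on neither plane, let f be the central projection from Γ to Ω through p, let l be the vanishing line of Γ and let m be the vanishing line of Ω. Then f restricts to a homeomorphism from Γ \ l onto Ω \ m (with the subspace topologies inherited from ℝ³). -/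
noncomputable section

/-- `f` is the central projection from `Γ` to `Ω` through `p`: every non-vanishing point
`a` of `Γ` is sent to the (unique) intersection point of the line through `p` and `a`
with `Ω`. -/
def IsCentralProj (Γ Ω : AffineSubspace ℝ E3) (p : E3) (f : E3 → E3) : Prop :=
  ∀ a ∈ Γ, a -ᵥ p ∉ Ω.direction → f a ∈ Ω ∧ f a ∈ affineSpan ℝ {p, a}

/-!
A hyperplane missing `p` has a unique equation `φ (x - p) = 1` with `φ` linear, and its direction
is `ker φ`. If `Γ` is `γ (x - p) = 1` and `Ω` is `ω (x - p) = 1`, the central projection divides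
`a - p` by `ω (a - p)`: it carries `{γ = 1, ω ≠ 0}` continuously into `{ω = 1, γ ≠ 0}`, and
dividing by `γ` undoes it.
-/

section RadialProjection

variable {k V P : Type*} [DivisionRing k] [AddCommGroup V] [Module k V] [AddTorsor V P]

/-- The central projection through `p` onto the hyperplane `{x | φ (x -ᵥ p) = 1}`. Where
`φ (a -ᵥ p) = 0` it has the junk value `p`. -/
def radialProj (φ : V →ₗ[k] k) (p a : P) : P :=
  AffineMap.lineMap p a (φ (a -ᵥ p))⁻¹

theorem apply_radialProj_vsub (φ ψ : V →ₗ[k] k) (p a : P) :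
    ψ (radialProj φ p a -ᵥ p) = (φ (a -ᵥ p))⁻¹ * ψ (a -ᵥ p) := by
  rw [radialProj, AffineMap.lineMap_vsub_left, map_smul, smul_eq_mul]

theorem mapsTo_radialProj (γ ω : V →ₗ[k] k) (p : P) :
    Set.MapsTo (radialProj ω p) {a | γ (a -ᵥ p) = 1 ∧ ω (a -ᵥ p) ≠ 0}
      {b | ω (b -ᵥ p) = 1 ∧ γ (b -ᵥ p) ≠ 0} := by
  rintro a ⟨hγ, hω⟩
  refine ⟨?_, ?_⟩
  · rw [apply_radialProj_vsub, inv_mul_cancel₀ hω]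
  · rw [apply_radialProj_vsub, hγ, mul_one]
    exact inv_ne_zero hω

theorem radialProj_radialProj {φ ψ : V →ₗ[k] k} {p a : P}
    (hψ : ψ (a -ᵥ p) = 1) (hφ : φ (a -ᵥ p) ≠ 0) :
    radialProj ψ p (radialProj φ p a) = a := by
  have hscale : ψ (radialProj φ p a -ᵥ p) = (φ (a -ᵥ p))⁻¹ := by
    rw [apply_radialProj_vsub, hψ, mul_one]
  rw [radialProj, hscale, inv_inv, radialProj, AffineMap.lineMap_lineMap_right,
    mul_inv_cancel₀ hφ, AffineMap.lineMap_apply_one]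

theorem eq_radialProj_of_mem_affineSpan_pair {φ : V →ₗ[k] k} {p a b : P}
    (hb : b ∈ line[k, p, a]) (hφ : φ (b -ᵥ p) = 1) : b = radialProj φ p a := by
  obtain ⟨r, rfl⟩ := mem_affineSpan_pair_iff_exists_lineMap_eq.1 hb
  rw [AffineMap.lineMap_vsub_left, map_smul, smul_eq_mul] at hφ
  rw [radialProj, eq_inv_of_mul_eq_one_left hφ]

variable [TopologicalSpace k] [ContinuousInv₀ k] [TopologicalSpace V] [ContinuousSMul k V]
  [TopologicalSpace P] [IsTopologicalAddTorsor P]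

theorem continuousOn_radialProj (φ : V →L[k] k) (p : P) :
    ContinuousOn (radialProj (φ : V →ₗ[k] k) p) {a | φ (a -ᵥ p) ≠ 0} := by
  have hφ : ContinuousOn (fun a : P ↦ φ (a -ᵥ p)) {a | φ (a -ᵥ p) ≠ 0} := by fun_prop
  exact continuousOn_const.lineMap continuousOn_id (hφ.inv₀ fun _ ha ↦ ha)

/-- The central projection through `p` between the hyperplanes `{x | γ (x -ᵥ p) = 1}` and
`{x | ω (x -ᵥ p) = 1}`, as a partial homeomorphism of the ambient space. -/
def radialProjPartialHomeomorph (γ ω : V →L[k] k) (p : P) : PartialHomeomorph P P where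
  toFun := radialProj (ω : V →ₗ[k] k) p
  invFun := radialProj (γ : V →ₗ[k] k) p
  source := {a | γ (a -ᵥ p) = 1 ∧ ω (a -ᵥ p) ≠ 0}
  target := {b | ω (b -ᵥ p) = 1 ∧ γ (b -ᵥ p) ≠ 0}
  map_source' := mapsTo_radialProj (γ : V →ₗ[k] k) (ω : V →ₗ[k] k) p
  map_target' := mapsTo_radialProj (ω : V →ₗ[k] k) (γ : V →ₗ[k] k) p
  left_inv' _ ha := radialProj_radialProj ha.1 ha.2
  right_inv' _ hb := radialProj_radialProj hb.1 hb.2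
  continuousOn_toFun := (continuousOn_radialProj ω p).mono fun _ ha ↦ ha.2
  continuousOn_invFun := (continuousOn_radialProj γ p).mono fun _ hb ↦ hb.2

end RadialProjection

section Hyperplane

/-- The vanishing set of `Γ` for the central projection from `Γ` to `Ω` through `p`: the points
of `Γ` whose line to `p` is parallel to `Ω`. -/
def vanishingSet {k V P : Type*} [Ring k] [AddCommGroup V] [Module k V] [AddTorsor V P]
    (Γ Ω : AffineSubspace k P) (p : P) : Set P :=
  {v | v ∈ Γ ∧ v -ᵥ p ∈ Ω.direction}

theorem mem_diff_vanishingSet {k V P : Type*} [Ring k] [AddCommGroup V] [Module k V]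
    [AddTorsor V P] {Γ Ω : AffineSubspace k P} {p a : P} :
    a ∈ (Γ : Set P) \ vanishingSet Γ Ω p ↔ a ∈ Γ ∧ a -ᵥ p ∉ Ω.direction :=
  and_congr_right fun ha ↦ not_congr (and_iff_right ha)

theorem isCoatom_of_finrank_add_one_eq {k V : Type*} [DivisionRing k] [AddCommGroup V]
    [Module k V] {W : Submodule k V} (hW : Module.finrank k W + 1 = Module.finrank k V) :
    IsCoatom W := by
  have : Module.Finite k V := Module.finite_of_finrank_pos (by lia)
  refine ⟨fun htop ↦ ?_, fun U hU ↦ Submodule.eq_top_of_finrank_eq ?_⟩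
  · rw [htop, finrank_top] at hW
    lia
  · have hlt := Submodule.finrank_lt_finrank_of_lt hU
    have hle := U.finrank_le
    lia

theorem exists_ker_eq_and_apply_eq_one {k V : Type*} [Field k] [AddCommGroup V]
    [Module k V] {W : Submodule k V} (hW : IsCoatom W) {v : V} (hv : v ∉ W) :
    ∃ φ : V →ₗ[k] k, LinearMap.ker φ = W ∧ φ v = 1 := by
  obtain ⟨g, hgv, hWg⟩ := Submodule.exists_le_ker_of_notMem hv
  have hg : g ≠ 0 := fun h ↦ hgv (by rw [h, LinearMap.zero_apply])
  have hker : LinearMap.ker g = W := (hW.le_iff_eq (mt LinearMap.ker_eq_top.1 hg)).1 hWg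
  refine ⟨(g v)⁻¹ • g, ?_, inv_mul_cancel₀ hgv⟩
  rw [LinearMap.ker_smul g _ (inv_ne_zero hgv), hker]

variable {k V P : Type*} [AddCommGroup V] [TopologicalSpace V] [AddTorsor V P]

/-- A closed affine hyperplane: a nonempty affine subspace whose direction is closed and of
codimension one, the latter expressed as being maximal among the proper submodules. -/
structure IsClosedHyperplane [Ring k] [Module k V] (s : AffineSubspace k P) : Prop where
  nonempty : (s : Set P).Nonempty
  isCoatom_direction : IsCoatom s.direction
  isClosed_direction : IsClosed (s.direction : Set V)

variable [NontriviallyNormedField k] [Module k V] [IsTopologicalAddGroup V] [ContinuousSMul k V]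

theorem IsClosedHyperplane.exists_equation {s : AffineSubspace k P} (hs : IsClosedHyperplane s)
    {p : P} (hp : p ∉ s) :
    ∃ φ : V →L[k] k, (∀ v, v ∈ s.direction ↔ φ v = 0) ∧ ∀ x, x ∈ s ↔ φ (x -ᵥ p) = 1 := by
  obtain ⟨q, hq⟩ := hs.nonempty
  have hqp : q -ᵥ p ∉ s.direction := fun h ↦
    hp ((AffineSubspace.vsub_left_mem_direction_iff_mem hq p).1 h)
  obtain ⟨φ, hker, hφ⟩ := exists_ker_eq_and_apply_eq_one hs.isCoatom_direction hqp
  have hdir (v : V) : v ∈ s.direction ↔ φ v = 0 := by rw [← hker, LinearMap.mem_ker]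
  refine ⟨⟨φ, φ.continuous_of_isClosed_ker (hker ▸ hs.isClosed_direction)⟩, hdir, fun x ↦ ?_⟩
  calc x ∈ s ↔ x -ᵥ q ∈ s.direction :=
        (AffineSubspace.vsub_right_mem_direction_iff_mem hq x).symm
    _ ↔ φ (x -ᵥ p) = 1 := by
        rw [hdir, ← vsub_sub_vsub_cancel_right x q p, map_sub, hφ, sub_eq_zero]

theorem centralProj_homeomorph_general [TopologicalSpace P] [IsTopologicalAddTorsor P]
    {Γ Ω : AffineSubspace k P} {p : P} {f : P → P}
    (hΓ : IsClosedHyperplane Γ) (hΩ : IsClosedHyperplane Ω) (hpΓ : p ∉ Γ) (hpΩ : p ∉ Ω)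
    (hf : ∀ a ∈ Γ, a -ᵥ p ∉ Ω.direction → f a ∈ Ω ∧ f a ∈ line[k, p, a]) :
    ∃ h : ((Γ : Set P) \ vanishingSet Γ Ω p : Set P) ≃ₜ ((Ω : Set P) \ vanishingSet Ω Γ p : Set P),
      ∀ x, (h x : P) = f x := by
  obtain ⟨γ, hγ₀, hγ₁⟩ := hΓ.exists_equation hpΓ
  obtain ⟨ω, hω₀, hω₁⟩ := hΩ.exists_equation hpΩ
  let e := radialProjPartialHomeomorph γ ω p
  have hsource : (Γ : Set P) \ vanishingSet Γ Ω p = e.source := by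
    ext a
    rw [mem_diff_vanishingSet, hγ₁, hω₀]
    rfl
  have htarget : (Ω : Set P) \ vanishingSet Ω Γ p = e.target := by
    ext b
    rw [mem_diff_vanishingSet, hω₁, hγ₀]
    rfl
  refine ⟨(Homeomorph.setCongr hsource).trans
    (e.toHomeomorphSourceTarget.trans (Homeomorph.setCongr htarget.symm)), fun x ↦ ?_⟩
  obtain ⟨hxΓ, hxΩ⟩ := mem_diff_vanishingSet.1 x.2
  obtain ⟨hfΩ, hfline⟩ := hf x hxΓ hxΩ
  exact (eq_radialProj_of_mem_affineSpan_pair (φ := ω) hfline ((hω₁ _).1 hfΩ)).symm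

end Hyperplane

theorem IsPlane.isClosedHyperplane {s : AffineSubspace ℝ E3} (hs : IsPlane s) :
    IsClosedHyperplane s where
  nonempty := hs.1
  isCoatom_direction :=
    isCoatom_of_finrank_add_one_eq (by rw [hs.2, Module.finrank_fin_fun])
  isClosed_direction := s.direction.closed_of_finiteDimensional

/-- The central projection `f` restricts to a homeomorphism from `Γ` minus its vanishing
line onto `Ω` minus its vanishing line (with the subspace topologies from `ℝ³`). -/
theorem centralProj_homeomorph
    (Γ Ω : AffineSubspace ℝ E3) (p : E3) (f : E3 → E3)
    (hΓ : IsPlane Γ) (hΩ : IsPlane Ω)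
    (hnp : Γ.direction ≠ Ω.direction)
    (hpΓ : p ∉ Γ) (hpΩ : p ∉ Ω)
    (hf : IsCentralProj Γ Ω p f) :
    ∃ h : ({a : E3 | a ∈ Γ ∧ ¬ VanishingPt Γ Ω p a} ≃ₜ
           {b : E3 | b ∈ Ω ∧ ¬ VanishingPt Ω Γ p b}),
      ∀ x, (h x : E3) = f (x : E3) :=
  centralProj_homeomorph_general hΓ.isClosedHyperplane hΩ.isClosedHyperplane hpΓ hpΩ hf
end
end

section
/- Let Γ and Ω be two non-parallel affine planes in ℝ³, let p be a point lying on neither plane, let f be the central projection from Γ to Ω through p, and let g be the central projection from Ω to Γ through p. For every point a ∈ Γ that is not a vanishing point of Γ, the point f(a) is not a vanishing point of Ω, g(f(a)) is defined, and g(f(a)) = a. In other words, the inverse of f (away from the vanishing lines) is itself a central projection through p. -/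
noncomputable section

/-!
Let `b = f a`. Since `p ∉ Ω`, the point `b` differs from `p`, so the line through `p` and `b` is
the line through `p` and `a`. This line meets `Γ` in `a` but contains `p ∉ Γ`, so it is not
parallel to `Γ` and meets `Γ` only in `a`. Hence `g b = a`.
-/

section Ring

variable {k V P : Type*} [Ring k] [AddCommGroup V] [Module k V] [AddTorsor V P]

theorem vsub_mem_of_mem_affineSpan_pair {p a b : P} {W : Submodule k V}
    (ha : a ∈ line[k, p, b]) (hb : b -ᵥ p ∈ W) : a -ᵥ p ∈ W := by
  have hline : line[k, p, b] ≤ AffineSubspace.mk' p W :=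
    affineSpan_pair_le_of_mem_of_mem (AffineSubspace.self_mem_mk' p W) hb
  exact hline ha

end Ring

section DivisionRing

variable {k V P : Type*} [DivisionRing k] [AddCommGroup V] [Module k V] [AddTorsor V P]

theorem subsingleton_affineSpan_pair_inter_of_not_le {x y : P} {s : AffineSubspace k P}
    (h : ¬ line[k, x, y] ≤ s) : (line[k, x, y] ∩ s : Set P).Subsingleton := by
  rintro a ⟨ha, has⟩ b ⟨hb, hbs⟩
  by_contra hab
  apply h
  rw [← affineSpan_pair_eq_of_mem_of_mem_of_ne ha hb hab]
  exact affineSpan_pair_le_of_mem_of_mem has hbs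

theorem centralProj_inverse_general {Γ Ω : AffineSubspace k P} {p : P} {f g : P → P}
    (hpΓ : p ∉ Γ) (hpΩ : p ∉ Ω)
    (hf : ∀ a ∈ Γ, a -ᵥ p ∉ Ω.direction → f a ∈ Ω ∧ f a ∈ line[k, p, a])
    (hg : ∀ b ∈ Ω, b -ᵥ p ∉ Γ.direction → g b ∈ Γ ∧ g b ∈ line[k, p, b]) :
    ∀ a ∈ Γ, a -ᵥ p ∉ Ω.direction →
      f a ∈ Ω ∧ f a -ᵥ p ∉ Γ.direction ∧ g (f a) = a := by
  intro a ha hav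
  obtain ⟨hfΩ, hf_line⟩ := hf a ha hav
  have hfp : f a ≠ p := ne_of_mem_of_not_mem hfΩ hpΩ
  have hline : line[k, p, f a] = line[k, p, a] :=
    affineSpan_pair_eq_of_right_mem_of_ne hf_line hfp
  have ha_line : a ∈ line[k, p, f a] := hline ▸ right_mem_affineSpan_pair k p a
  have hfv : f a -ᵥ p ∉ Γ.direction := fun h ↦
    hpΓ ((AffineSubspace.vsub_left_mem_direction_iff_mem ha p).1
      (vsub_mem_of_mem_affineSpan_pair ha_line h))
  obtain ⟨hgΓ, hg_line⟩ := hg (f a) hfΩ hfv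
  have hnle : ¬ line[k, p, f a] ≤ Γ := fun h ↦ hpΓ (h (left_mem_affineSpan_pair k p (f a)))
  exact ⟨hfΩ, hfv, subsingleton_affineSpan_pair_inter_of_not_le hnle
    ⟨hg_line, hgΓ⟩ ⟨ha_line, ha⟩⟩

end DivisionRing

/-- If `f` is the central projection from `Γ` to `Ω` through `p` and `g` is the central
projection from `Ω` to `Γ` through `p`, then for every non-vanishing point `a` of `Γ`,
the image `f a` is a non-vanishing point of `Ω` (so `g (f a)` is defined) and
`g (f a) = a`: the inverse of `f` is itself a central projection through `p`. -/
theorem centralProj_inverse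
    (Γ Ω : AffineSubspace ℝ E3) (p : E3) (f g : E3 → E3)
    (hΓ : IsPlane Γ) (hΩ : IsPlane Ω)
    (hnp : Γ.direction ≠ Ω.direction)
    (hpΓ : p ∉ Γ) (hpΩ : p ∉ Ω)
    (hf : IsCentralProj Γ Ω p f) (hg : IsCentralProj Ω Γ p g) :
    ∀ a ∈ Γ, a -ᵥ p ∉ Ω.direction →
      f a ∈ Ω ∧ ¬ VanishingPt Ω Γ p (f a) ∧ g (f a) = a := by
  intro a ha hav
  obtain ⟨hfΩ, hfv, hgf⟩ := centralProj_inverse_general hpΓ hpΩ hf hg a ha hav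
  exact ⟨hfΩ, fun h ↦ hfv h.2, hgf⟩
end
end

section
/- Let Γ and Ω be two non-parallel affine planes in ℝ³, let p be a point lying on neither plane, let f be the central projection from Γ to Ω through p, and let n be the vanishing line of Γ. Let L and M be two distinct affine lines contained in Γ, neither equal to n, and let L' and M' be the affine lines of Ω containing the images under f of the non-vanishing points of L and of M, respectively. If L' and M' are parallel and disjoint, then either both L and M are parallel to n, or L and M meet at a vanishing point of Γ. -/
noncomputable section

open scoped Affine

/-- `L'` is the image line of the line `L ⊆ Γ` under the central projection `f`: the
affine line of `Ω` containing the images of all non-vanishing points of `L`. -/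
def IsImageLine (Γ Ω : AffineSubspace ℝ E3) (p : E3) (f : E3 → E3)
    (L L' : AffineSubspace ℝ E3) : Prop :=
  IsLine L' ∧ L' ≤ Ω ∧ ∀ x ∈ L, x -ᵥ p ∉ Ω.direction → f x ∈ L'

section AffineLines

/-!
Let `W` be the common direction of `L'` and `M'`. Central projection is injective on `L`, so `L'` is
spanned by the images of two points of `L` and lies in the plane spanned by `p` and `L`; likewise
for `M`. These two planes therefore contain the line `ℓ` through `p` with direction `W`.

If `ℓ` meets `Γ` at a point `v`, then `v` lies on `L`, the intersection of `Γ` with the plane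
spanned by `p` and `L`; likewise `v` lies on `M`, and `v` is a vanishing point since `W` is a
direction of `Ω`. If `ℓ` misses `Γ`, then it misses the lines `L` and `M`, each coplanar with it, so
`L` and `M` both have direction `W`, which is a direction of both `Γ` and `Ω`, hence that of `n`.
-/

open AffineSubspace Module

variable {k V P : Type*} [DivisionRing k] [AddCommGroup V] [Module k V] [AddTorsor V P]
  {S T Γ L M L' : AffineSubspace k P} {p q x y : P} {W : Submodule k V}

theorem nonempty_of_direction_ne_bot (hS : S.direction ≠ ⊥) : (S : Set P).Nonempty := by
  rw [nonempty_iff_ne_bot]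
  rintro rfl
  exact hS (direction_bot k V P)

theorem parallel_of_direction_eq_of_ne_bot (hST : S.direction = T.direction)
    (hS : S.direction ≠ ⊥) : S ∥ T := by
  have hS_ne := (nonempty_iff_ne_bot S).1 (nonempty_of_direction_ne_bot hS)
  have hT_ne := (nonempty_iff_ne_bot T).1 (nonempty_of_direction_ne_bot (hST ▸ hS))
  exact parallel_iff_direction_eq_and_eq_bot_iff_eq_bot.2 ⟨hST, iff_of_false hS_ne hT_ne⟩

theorem eq_of_le_of_isAtom_direction (hS : S.direction ≠ ⊥) (hT : IsAtom T.direction)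
    (hST : S ≤ T) : S = T :=
  eq_of_direction_eq_of_nonempty_of_le ((hT.le_iff_eq hS).1 (direction_le hST))
    (nonempty_of_direction_ne_bot hS) hST

theorem affineSpan_insert_inf_eq (hp : p ∉ Γ) (hS : (S : Set P).Nonempty) (hSΓ : S ≤ Γ) :
    affineSpan k (insert p (S : Set P)) ⊓ Γ = S := by
  obtain ⟨a, ha⟩ := hS
  refine le_antisymm (fun v ⟨hv_span, hvΓ⟩ ↦ ?_)
    (le_inf (fun x hx ↦ mem_affineSpan k (Set.mem_insert_of_mem p hx)) hSΓ)
  obtain ⟨r, s, hs, rfl⟩ := (mem_affineSpan_insert_iff ha p v).1 hv_span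
  obtain rfl | hr := eq_or_ne r 0
  · simpa only [zero_smul, zero_vadd] using hs
  · have h_smul : r • (p -ᵥ a) ∈ Γ.direction :=
      (vadd_mem_iff_mem_direction _ (hSΓ hs)).1 hvΓ
    have h_vsub : p -ᵥ a ∈ Γ.direction := (Submodule.smul_mem_iff _ hr).1 h_smul
    exact absurd ((vsub_right_mem_direction_iff_mem (hSΓ ha) p).1 h_vsub) hp

theorem le_direction_or_exists_vsub_mem (hS : (S : Set P).Nonempty)
    (hW : W ≤ (affineSpan k (insert p (S : Set P))).direction) :
    W ≤ S.direction ∨ ∃ v ∈ S, v -ᵥ p ∈ W := by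
  obtain ⟨a, ha⟩ := hS
  refine or_iff_not_imp_left.2 fun h_not_le ↦ ?_
  obtain ⟨w, hwW, hwS⟩ := SetLike.not_le_iff_exists.1 h_not_le
  have hw_sup := hW hwW
  rw [direction_affineSpan_insert ha, Submodule.mem_sup] at hw_sup
  obtain ⟨_, h_span, d, hd, rfl⟩ := hw_sup
  obtain ⟨r, rfl⟩ := Submodule.mem_span_singleton.1 h_span
  have hr : r ≠ 0 := by
    rintro rfl
    exact hwS (by simpa only [zero_smul, zero_add] using hd)
  refine ⟨-(r⁻¹ • d) +ᵥ a, vadd_mem_of_mem_direction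
    (neg_mem (Submodule.smul_mem _ _ hd)) ha, ?_⟩
  have h_vsub : (-(r⁻¹ • d) +ᵥ a) -ᵥ p = -(r⁻¹ • (r • (p -ᵥ a) + d)) := by
    rw [smul_add, inv_smul_smul₀ hr, neg_add, neg_vsub_eq_vsub_rev, vadd_vsub_assoc, add_comm]
  rw [h_vsub]
  exact neg_mem (Submodule.smul_mem _ _ hwW)

theorem mem_of_vsub_mem_direction_affineSpan_insert (hp : p ∉ Γ) (hS : (S : Set P).Nonempty)
    (hSΓ : S ≤ Γ) (hx : x ∈ Γ) (hxp : x -ᵥ p ∈ (affineSpan k (insert p (S : Set P))).direction) :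
    x ∈ S := by
  have hp_span := mem_affineSpan k (Set.mem_insert p (S : Set P))
  have hx_span := (vsub_right_mem_direction_iff_mem hp_span x).1 hxp
  exact (affineSpan_insert_inf_eq hp hS hSΓ).le ⟨hx_span, hx⟩

theorem direction_eq_of_forall_vsub_notMem (hS : IsAtom S.direction) (hW : W ≠ ⊥)
    (hWS : W ≤ (affineSpan k (insert p (S : Set P))).direction) (hp : ∀ v ∈ S, v -ᵥ p ∉ W) :
    S.direction = W := by
  have h_le : W ≤ S.direction :=
    (le_direction_or_exists_vsub_mem (nonempty_of_direction_ne_bot hS.1) hWS).resolve_right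
      fun ⟨v, hvS, hvW⟩ ↦ hp v hvS hvW
  exact ((hS.le_iff_eq hW).1 h_le).symm

theorem directions_eq_or_exists_vsub_mem (hp : p ∉ Γ) (hLΓ : L ≤ Γ) (hMΓ : M ≤ Γ)
    (hW : W ≠ ⊥) (hL : IsAtom L.direction) (hM : IsAtom M.direction)
    (hWL : W ≤ (affineSpan k (insert p (L : Set P))).direction)
    (hWM : W ≤ (affineSpan k (insert p (M : Set P))).direction) :
    (L.direction = W ∧ M.direction = W) ∨ ∃ v, v ∈ L ∧ v ∈ M ∧ v -ᵥ p ∈ W := by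
  by_cases! h_meets : ∃ v ∈ Γ, v -ᵥ p ∈ W
  · obtain ⟨v, hvΓ, hvW⟩ := h_meets
    have hvL : v ∈ L := mem_of_vsub_mem_direction_affineSpan_insert hp
      (nonempty_of_direction_ne_bot hL.1) hLΓ hvΓ (hWL hvW)
    have hvM : v ∈ M := mem_of_vsub_mem_direction_affineSpan_insert hp
      (nonempty_of_direction_ne_bot hM.1) hMΓ hvΓ (hWM hvW)
    exact .inr ⟨v, hvL, hvM, hvW⟩
  · exact .inl
      ⟨direction_eq_of_forall_vsub_notMem hL hW hWL fun v hv ↦ h_meets v (hLΓ hv),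
        direction_eq_of_forall_vsub_notMem hM hW hWM fun v hv ↦ h_meets v (hMΓ hv)⟩

theorem eq_of_mem_line_of_mem_line (hp : p ∉ S) (hx : x ∈ S) (hy : y ∈ S) (hqp : q ≠ p)
    (hqx : q ∈ line[k, p, x]) (hqy : q ∈ line[k, p, y]) : x = y := by
  have h_line : line[k, p, x] = line[k, p, y] := by
    rw [← affineSpan_pair_eq_of_right_mem_of_ne hqx hqp,
      affineSpan_pair_eq_of_right_mem_of_ne hqy hqp]
  have h_inf : line[k, p, y] ⊓ S = affineSpan k {y} := by
    simpa only [coe_affineSpan_singleton] using affineSpan_insert_inf_eq hp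
      ((Set.singleton_nonempty y).affineSpan k) (affineSpan_le.2 (Set.singleton_subset_iff.2 hy))
  have hx_inf : x ∈ line[k, p, y] ⊓ S := ⟨h_line ▸ right_mem_affineSpan_pair k p x, hx⟩
  exact (mem_affineSpan_singleton k V).1 (h_inf ▸ hx_inf)

-- Over the field with two elements a line has two points, so `x` can be its only point off `T`.
theorem exists_ne_notMem [Nontrivial kˣ] (hS : S.direction ≠ ⊥) (hx : x ∈ S) (hxT : x ∉ T) :
    ∃ y ∈ S, y ≠ x ∧ y ∉ T := by
  obtain ⟨d, hd, hd0⟩ := S.direction.exists_mem_ne_zero_of_ne_bot hS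
  obtain ⟨u, hu⟩ := exists_ne (1 : kˣ)
  have mem_S (c : kˣ) : (c : k) • d +ᵥ x ∈ S :=
    vadd_mem_of_mem_direction (Submodule.smul_mem _ _ hd) hx
  have ne_x (c : kˣ) : (c : k) • d +ᵥ x ≠ x := fun h ↦
    smul_ne_zero c.ne_zero hd0 (vadd_right_injective x (h.trans (zero_vadd V x).symm))
  by_contra! mem_T
  have hdxT := mem_T _ (mem_S 1) (ne_x 1)
  have h_diff : ((u : k) - (1 : kˣ)) • d ∈ T.direction := by
    rw [sub_smul, ← vadd_vsub_vadd_cancel_right _ _ x]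
    exact vsub_mem_direction (mem_T _ (mem_S u) (ne_x u)) hdxT
  have hdT : d ∈ T.direction :=
    (Submodule.smul_mem_iff _ (sub_ne_zero.2 (Units.val_injective.ne hu))).1 h_diff
  exact hxT ((vadd_mem_iff_mem_of_mem_direction (Submodule.smul_mem _ _ hdT)).1 hdxT)

theorem image_direction_le_direction_affineSpan_insert [Nontrivial kˣ] {f : P → P} (hpS : p ∉ S)
    (hpL' : p ∉ L') (hS : S.direction ≠ ⊥) (hL' : IsAtom L'.direction) (hST : ¬ S ≤ T)
    (hfL' : ∀ x ∈ S, x ∉ T → f x ∈ L') (hf : ∀ x ∈ S, x ∉ T → f x ∈ line[k, p, x]) :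
    L'.direction ≤ (affineSpan k (insert p (S : Set P))).direction := by
  obtain ⟨x, hx, hxT⟩ := SetLike.not_le_iff_exists.1 hST
  obtain ⟨y, hy, hyx, hyT⟩ := exists_ne_notMem hS hx hxT
  have hf_ne : f y ≠ f x := fun h_eq ↦ hyx <|
    eq_of_mem_line_of_mem_line hpS hy hx (fun hp ↦ hpL' (hp ▸ hfL' y hy hyT))
      (hf y hy hyT) (h_eq ▸ hf x hx hxT)
  have hf_mem : ∀ z ∈ S, z ∉ T → f z ∈ affineSpan k (insert p (S : Set P)) := fun z hz hzT ↦
    affineSpan_mono k (Set.insert_subset_insert (Set.singleton_subset_iff.2 hz)) (hf z hz hzT)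
  refine hL'.not_disjoint_iff_le.1 fun h_disj ↦ hf_ne (vsub_eq_zero_iff_eq.1 ?_)
  exact Submodule.disjoint_def.1 h_disj _
    (vsub_mem_direction (hfL' y hy hyT) (hfL' x hx hxT))
    (vsub_mem_direction (hf_mem y hy hyT) (hf_mem x hx hxT))

theorem centralProj_parallel_images_general [Nontrivial kˣ]
    {Γ Ω n L M L' M' : AffineSubspace k P} {p : P} {f : P → P} (hpΓ : p ∉ Γ) (hpΩ : p ∉ Ω)
    (hf : ∀ a ∈ Γ, a -ᵥ p ∉ Ω.direction → f a ∈ Ω ∧ f a ∈ line[k, p, a])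
    (hn : finrank k n.direction = 1) (hnvan : (n : Set P) = {v | v ∈ Γ ∧ v -ᵥ p ∈ Ω.direction})
    (hL : finrank k L.direction = 1) (hM : finrank k M.direction = 1) (hLΓ : L ≤ Γ) (hMΓ : M ≤ Γ)
    (hLn : L ≠ n) (hMn : M ≠ n) (hL' : finrank k L'.direction = 1) (hL'Ω : L' ≤ Ω)
    (hM'Ω : M' ≤ Ω) (hfL : ∀ x ∈ L, x -ᵥ p ∉ Ω.direction → f x ∈ L')
    (hfM : ∀ x ∈ M, x -ᵥ p ∉ Ω.direction → f x ∈ M') (hpar : L' ∥ M') :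
    (L ∥ n ∧ M ∥ n) ∨ ∃ v, v ∈ L ∧ v ∈ M ∧ v ∈ Γ ∧ v -ᵥ p ∈ Ω.direction := by
  have hM' : finrank k M'.direction = 1 := hpar.direction_eq ▸ hL'
  rw [← Submodule.isAtom_iff_finrank_eq_one] at hn hL hM hL' hM'
  obtain rfl : n = Γ ⊓ mk' p Ω.direction := SetLike.coe_injective hnvan
  have image_direction_le {S S' : AffineSubspace k P} (hS : IsAtom S.direction) (hSΓ : S ≤ Γ)
      (hSn : S ≠ Γ ⊓ mk' p Ω.direction) (hS' : IsAtom S'.direction) (hS'Ω : S' ≤ Ω)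
      (hfS : ∀ x ∈ S, x -ᵥ p ∉ Ω.direction → f x ∈ S') :
      S'.direction ≤ (affineSpan k (insert p (S : Set P))).direction :=
    image_direction_le_direction_affineSpan_insert (fun h ↦ hpΓ (hSΓ h)) (fun h ↦ hpΩ (hS'Ω h))
      hS.1 hS' (fun h ↦ hSn (eq_of_le_of_isAtom_direction hS.1 hn (le_inf hSΓ h)))
      hfS (fun x hx hxΩ ↦ (hf x (hSΓ hx) hxΩ).2)
  have hWL := image_direction_le hL hLΓ hLn hL' hL'Ω hfL
  have hWM := hpar.direction_eq ▸ image_direction_le hM hMΓ hMn hM' hM'Ω hfM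
  obtain ⟨hLW, hMW⟩ | ⟨v, hvL, hvM, hvW⟩ :=
    directions_eq_or_exists_vsub_mem hpΓ hLΓ hMΓ hL'.1 hL hM hWL hWM
  · obtain ⟨a, haΓ, haΩ⟩ := nonempty_of_direction_ne_bot hn.1
    have h_dir : L'.direction = (Γ ⊓ mk' p Ω.direction).direction := by
      refine (hn.le_iff_eq hL'.1).1 ?_
      rw [direction_inf_of_mem haΓ haΩ, direction_mk']
      exact le_inf (hLW ▸ direction_le hLΓ) (direction_le hL'Ω)
    exact .inl ⟨parallel_of_direction_eq_of_ne_bot (hLW.trans h_dir) hL.1,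
      parallel_of_direction_eq_of_ne_bot (hMW.trans h_dir) hM.1⟩
  · exact .inr ⟨v, hvL, hvM, hLΓ hvL, direction_le hL'Ω hvW⟩

end AffineLines

/-- If the image lines `L'` and `M'` of two distinct lines `L, M ⊆ Γ` (neither equal to
the vanishing line `n` of `Γ`) are parallel and disjoint, then either both `L` and `M`
are parallel to `n`, or `L` and `M` meet at a vanishing point of `Γ`. -/
theorem centralProj_parallel_images
    (Γ Ω : AffineSubspace ℝ E3) (p : E3) (f : E3 → E3)
    (hΓ : IsPlane Γ) (hΩ : IsPlane Ω)
    (hnp : Γ.direction ≠ Ω.direction)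
    (hpΓ : p ∉ Γ) (hpΩ : p ∉ Ω)
    (hf : IsCentralProj Γ Ω p f)
    (n : AffineSubspace ℝ E3) (hn : IsLine n)
    (hnvan : (n : Set E3) = {v : E3 | VanishingPt Γ Ω p v})
    (L M L' M' : AffineSubspace ℝ E3)
    (hL : IsLine L) (hM : IsLine M) (hLΓ : L ≤ Γ) (hMΓ : M ≤ Γ)
    (hLM : L ≠ M) (hLn : L ≠ n) (hMn : M ≠ n)
    (hL' : IsImageLine Γ Ω p f L L') (hM' : IsImageLine Γ Ω p f M M')
    (hpar : L' ∥ M') (hdisj : (L' : Set E3) ∩ (M' : Set E3) = ∅) :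
    (L ∥ n ∧ M ∥ n) ∨ ∃ v, v ∈ L ∧ v ∈ M ∧ VanishingPt Γ Ω p v := by
  have : Nontrivial ℝˣ := nontrivial_of_ne 1 (-1) (by norm_num [Units.ext_iff])
  exact centralProj_parallel_images_general hpΓ hpΩ hf hn.2 hnvan hL.2 hM.2 hLΓ hMΓ hLn hMn
    hL'.1.2 hL'.2.1 hM'.2.1 hL'.2.2 hM'.2.2 hpar
end
end

section
/- Let Γ and Ω be two non-parallel affine planes in ℝ³, let p be a point lying on neither plane, let f be the central projection from Γ to Ω through p, and let n be the vanishing line of Γ. Let L and M be two affine lines contained in Γ, neither equal to n, and suppose L and M meet at a point q that is not a vanishing point of Γ. Then the image lines L' and M' of L and M meet at the point f(q), which is not a vanishing point of Ω. -/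
noncomputable section

open scoped Affine

section DivisionRing

variable {k V P : Type*} [DivisionRing k] [AddCommGroup V] [Module k V] [AddTorsor V P]

theorem vsub_mem_iff_of_mem_affineSpan_pair {W : Submodule k V} {p q r : P}
    (hr : r ∈ affineSpan k {p, q}) (hrp : r ≠ p) : r -ᵥ p ∈ W ↔ q -ᵥ p ∈ W := by
  obtain ⟨t, rfl⟩ := mem_affineSpan_pair_iff_exists_lineMap_eq.1 hr
  have ht : t ≠ 0 := by
    rintro rfl
    exact hrp (AffineMap.lineMap_apply_zero p q)
  rw [AffineMap.lineMap_vsub_left, W.smul_mem_iff ht]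

theorem centralProj_meeting_images_general
    {Γ Ω L M L' M' : AffineSubspace k P} {p q : P} {f : P → P}
    (hpΓ : p ∉ Γ) (hpΩ : p ∉ Ω)
    (hf : ∀ a ∈ Γ, a -ᵥ p ∉ Ω.direction → f a ∈ Ω ∧ f a ∈ affineSpan k {p, a})
    (hL' : ∀ x ∈ L ⊓ Γ, x -ᵥ p ∉ Ω.direction → f x ∈ L')
    (hM' : ∀ x ∈ M ⊓ Γ, x -ᵥ p ∉ Ω.direction → f x ∈ M')
    (hqΓ : q ∈ Γ) (hqL : q ∈ L) (hqM : q ∈ M) (hq : q -ᵥ p ∉ Ω.direction) :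
    f q ∈ L' ∧ f q ∈ M' ∧ f q -ᵥ p ∉ Γ.direction := by
  obtain ⟨hfqΩ, hfq_line⟩ := hf q hqΓ hq
  have hfqp : f q ≠ p := ne_of_mem_of_not_mem hfqΩ hpΩ
  have hqp : q -ᵥ p ∉ Γ.direction :=
    mt (AffineSubspace.vsub_left_mem_direction_iff_mem hqΓ p).1 hpΓ
  exact ⟨hL' q ⟨hqL, hqΓ⟩ hq, hM' q ⟨hqM, hqΓ⟩ hq,
    mt (vsub_mem_iff_of_mem_affineSpan_pair hfq_line hfqp).1 hqp⟩

end DivisionRing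

/-- If two lines `L, M ⊆ Γ` (neither equal to the vanishing line `n` of `Γ`) meet at a
point `q` that is not a vanishing point of `Γ`, then their image lines `L'` and `M'` meet
at the point `f q`, which is not a vanishing point of `Ω`. -/
theorem centralProj_meeting_images
    (Γ Ω : AffineSubspace ℝ E3) (p : E3) (f : E3 → E3)
    (hΓ : IsPlane Γ) (hΩ : IsPlane Ω)
    (hnp : Γ.direction ≠ Ω.direction)
    (hpΓ : p ∉ Γ) (hpΩ : p ∉ Ω)
    (hf : IsCentralProj Γ Ω p f)
    (n : AffineSubspace ℝ E3) (hn : IsLine n)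
    (hnvan : (n : Set E3) = {v : E3 | VanishingPt Γ Ω p v})
    (L M L' M' : AffineSubspace ℝ E3)
    (hL : IsLine L) (hM : IsLine M) (hLΓ : L ≤ Γ) (hMΓ : M ≤ Γ)
    (hLn : L ≠ n) (hMn : M ≠ n)
    (hL' : IsImageLine Γ Ω p f L L') (hM' : IsImageLine Γ Ω p f M M')
    (q : E3) (hqL : q ∈ L) (hqM : q ∈ M) (hq : ¬ VanishingPt Γ Ω p q) :
    f q ∈ L' ∧ f q ∈ M' ∧ ¬ VanishingPt Ω Γ p (f q) := by
  have hqΓ : q ∈ Γ := hLΓ hqL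
  obtain ⟨hfqL', hfqM', hfq⟩ := centralProj_meeting_images_general hpΓ hpΩ hf
    (fun x hx => hL'.2.2 x hx.1) (fun x hx => hM'.2.2 x hx.1)
    hqΓ hqL hqM (fun h => hq ⟨hqΓ, h⟩)
  exact ⟨hfqL', hfqM', fun h => hfq h.2⟩
end
end

section
/- Let Γ and Ω be two non-parallel affine planes in ℝ³, let p be a point lying on neither plane, let f be the central projection from Γ to Ω through p, and let n be the vanishing line of Γ. Let L and M be two distinct affine lines contained in Γ, neither equal to n, and suppose L and M meet at a vanishing point v of Γ. Then the image lines L' and M' of L and M are disjoint (hence parallel): every common point of L' and M' would have to lie on the line through p and v, which is parallel to Ω. -/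
noncomputable section

open scoped Affine

/-!
The image line `L'` is the section by `Ω` of the plane `⟨p, L⟩` through `p` and `L`. Its direction
is `⟨p, L⟩.direction ⊓ Ω.direction`, which the modular law identifies with the span of `p -ᵥ v`;
the same holds for `M'`, so the two image lines are parallel. Since `p ∉ Γ`, the planes `⟨p, L⟩`
and `⟨p, M⟩` meet exactly in the line through `p` and `v`, and this line misses `Ω`, being parallel
to `Ω` through a point outside it.
-/

open AffineSubspace Module

section Ring

variable {k V P : Type*} [Ring k] [AddCommGroup V] [Module k V] [AddTorsor V P]
variable {Ω L : AffineSubspace k P} {p v z : P}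

theorem notMem_of_mem_line_of_vsub_mem_direction (hpΩ : p ∉ Ω) (hv : v -ᵥ p ∈ Ω.direction)
    (hz : z ∈ line[k, p, v]) : z ∉ Ω := by
  intro hzΩ
  have hdir : line[k, p, v].direction ≤ Ω.direction := by
    rwa [direction_affineSpan, vectorSpan_pair_rev, Submodule.span_singleton_le_iff_mem]
  have hpz : p -ᵥ z ∈ Ω.direction :=
    hdir (vsub_mem_direction (left_mem_affineSpan_pair k p v) hz)
  exact hpΩ ((vsub_right_mem_direction_iff_mem hzΩ p).1 hpz)

theorem direction_affineSpan_insert_inf (hvL : v ∈ L) (hv : v -ᵥ p ∈ Ω.direction)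
    (hLΩ : Disjoint L.direction Ω.direction)
    (hne : ((affineSpan k (insert p (L : Set P)) ⊓ Ω : AffineSubspace k P) : Set P).Nonempty) :
    (affineSpan k (insert p (L : Set P)) ⊓ Ω).direction = Submodule.span k {p -ᵥ v} := by
  have hle : Submodule.span k {p -ᵥ v} ≤ Ω.direction := by
    rw [Submodule.span_singleton_le_iff_mem, ← neg_vsub_eq_vsub_rev]
    exact neg_mem hv
  rw [direction_inf_of_mem_inf hne.some_mem, direction_affineSpan_insert hvL,
    sup_inf_assoc_of_le _ hle, hLΩ.eq_bot, sup_bot_eq]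

end Ring

section DivisionRing

variable {k V P : Type*} [DivisionRing k] [AddCommGroup V] [Module k V] [AddTorsor V P]
variable {Γ Ω L M L' M' : AffineSubspace k P} {p v x y z : P}

theorem inf_eq_affineSpan_singleton_of_finrank_direction_eq_one (hL : finrank k L.direction = 1)
    (hM : finrank k M.direction = 1) (hLM : L ≠ M) (hvL : v ∈ L) (hvM : v ∈ M) :
    L ⊓ M = affineSpan k {v} := by
  have hdir : L.direction ≠ M.direction := fun h ↦ hLM (ext_of_direction_eq h ⟨v, hvL, hvM⟩)
  have hdisj : Disjoint L.direction M.direction :=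
    (Submodule.isAtom_iff_finrank_eq_one.2 hL).disjoint_of_ne
      (Submodule.isAtom_iff_finrank_eq_one.2 hM) hdir
  refine ext_of_direction_eq ?_ ⟨v, ⟨hvL, hvM⟩, mem_affineSpan k rfl⟩
  rw [direction_inf_of_mem hvL hvM, hdisj.eq_bot, direction_affineSpan, vectorSpan_singleton]

theorem eq_of_finrank_direction_eq_one_of_mem_of_ne (hL : finrank k L.direction = 1)
    (hM : finrank k M.direction = 1) (hxL : x ∈ L) (hxM : x ∈ M) (hyL : y ∈ L) (hyM : y ∈ M)
    (hxy : x ≠ y) : L = M := by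
  by_contra hLM
  have hy : y ∈ L ⊓ M := ⟨hyL, hyM⟩
  rw [inf_eq_affineSpan_singleton_of_finrank_direction_eq_one hL hM hLM hxL hxM,
    mem_affineSpan_singleton] at hy
  exact hxy hy.symm

theorem nonempty_of_finrank_direction_eq_one (hL : finrank k L.direction = 1) :
    (L : Set P).Nonempty := by
  rw [nonempty_iff_ne_bot]
  rintro rfl
  rw [direction_bot, finrank_bot] at hL
  exact zero_ne_one hL

theorem parallel_of_direction_eq_of_finrank_direction_eq_one (hL : finrank k L.direction = 1)
    (h : L.direction = M.direction) : L ∥ M := by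
  have hL_ne := (nonempty_iff_ne_bot L).1 (nonempty_of_finrank_direction_eq_one hL)
  have hM_ne := (nonempty_iff_ne_bot M).1 (nonempty_of_finrank_direction_eq_one (h ▸ hL))
  exact parallel_iff_direction_eq_and_eq_bot_iff_eq_bot.2 ⟨h, iff_of_false hL_ne hM_ne⟩

theorem affineSpan_insert_inf_affineSpan_insert (hpΓ : p ∉ Γ) (hLΓ : L ≤ Γ) (hMΓ : M ≤ Γ)
    (hvL : v ∈ L) (hvM : v ∈ M) :
    affineSpan k (insert p (L : Set P)) ⊓ affineSpan k (insert p (M : Set P)) =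
      affineSpan k (insert p ((L ⊓ M : AffineSubspace k P) : Set P)) := by
  refine le_antisymm ?_ (le_inf
    (affineSpan_mono k (Set.insert_subset_insert inf_le_left))
    (affineSpan_mono k (Set.insert_subset_insert inf_le_right)))
  rintro z ⟨hzL, hzM⟩
  obtain ⟨r, l, hl, rfl⟩ := (mem_affineSpan_insert_iff hvL p z).1 hzL
  obtain ⟨s, m, hm, hlm⟩ := (mem_affineSpan_insert_iff hvM p _).1 hzM
  have hpv : p -ᵥ v ∉ Γ.direction := fun h ↦
    hpΓ ((vsub_right_mem_direction_iff_mem (hLΓ hvL) p).1 h)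
  have hsub : (s - r) • (p -ᵥ v) = l -ᵥ m := by
    rw [sub_smul, vadd_eq_vadd_iff_sub_eq_vsub.1 hlm]
  have hrs : s - r = 0 := by
    by_contra hne
    refine hpv ((Submodule.smul_mem_iff _ hne).1 ?_)
    exact hsub ▸ vsub_mem_direction (hLΓ hl) (hMΓ hm)
  have hl_eq : l = m := by
    rw [hrs, zero_smul] at hsub
    exact vsub_eq_zero_iff_eq.1 hsub.symm
  exact (mem_affineSpan_insert_iff (s := L ⊓ M) ⟨hvL, hvM⟩ p _).2
    ⟨r, l, ⟨hl, hl_eq ▸ hm⟩, rfl⟩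

theorem disjoint_direction_of_vsub_notMem (hL : finrank k L.direction = 1) (hxL : x ∈ L)
    (hvL : v ∈ L) (hx : x -ᵥ p ∉ Ω.direction) (hv : v -ᵥ p ∈ Ω.direction) :
    Disjoint L.direction Ω.direction := by
  refine (Submodule.isAtom_iff_finrank_eq_one.2 hL).not_le_iff_disjoint.1 fun hle ↦ hx ?_
  rw [← vsub_add_vsub_cancel x v p]
  exact add_mem (hle (vsub_mem_direction hxL hvL)) hv

theorem eq_of_mem_line_of_mem_line_s8 (hpL : p ∉ L) (hxL : x ∈ L) (hyL : y ∈ L) (hzp : z ≠ p)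
    (hzx : z ∈ line[k, p, x]) (hzy : z ∈ line[k, p, y]) : x = y := by
  by_contra hxy
  have hlines : line[k, p, x] = line[k, p, y] :=
    (affineSpan_pair_eq_of_right_mem_of_ne hzx hzp).symm.trans
      (affineSpan_pair_eq_of_right_mem_of_ne hzy hzp)
  have hx : x ∈ line[k, p, y] := hlines ▸ right_mem_affineSpan_pair k p x
  have hp : p ∈ line[k, x, y] := by
    rw [affineSpan_pair_eq_of_left_mem_of_ne hx hxy]
    exact left_mem_affineSpan_pair k p y
  exact hpL (affineSpan_pair_le_of_mem_of_mem hxL hyL hp)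

theorem exists_ne_vsub_notMem_direction [Nontrivial kˣ] (hxL : x ∈ L) (hvL : v ∈ L)
    (hx : x -ᵥ p ∉ Ω.direction) (hv : v -ᵥ p ∈ Ω.direction) :
    ∃ y ∈ L, y ≠ x ∧ y -ᵥ p ∉ Ω.direction := by
  have hxv : x -ᵥ v ∉ Ω.direction := fun h ↦
    hx (vsub_add_vsub_cancel x v p ▸ add_mem h hv)
  have hne : v ≠ x := by
    rintro rfl
    exact hx hv
  obtain ⟨c, hc⟩ := exists_ne (1 : kˣ)
  refine ⟨AffineMap.lineMap v x (c : k), AffineMap.lineMap_mem _ hvL hxL, ?_, fun h ↦ hxv ?_⟩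
  · rwa [Ne, AffineMap.lineMap_eq_right_iff, not_or, Units.val_eq_one, and_iff_right hne]
  · rw [AffineMap.lineMap_apply, vadd_vsub_assoc, Submodule.add_mem_iff_left _ hv] at h
    exact (Submodule.smul_mem_iff _ c.ne_zero).1 h

/-- `L'` is the image line of `L` under the central projection onto `Ω` through `p`. The projection
enters only through its graph, as the relation `y ∈ Ω ∧ y ∈ line[k, p, x]`, so no values at
vanishing points have to be chosen. -/
structure IsCentralImageLine (p : P) (Ω L L' : AffineSubspace k P) : Prop where
  finrank_direction : finrank k L'.direction = 1
  exists_mem : ∀ x ∈ L, x -ᵥ p ∉ Ω.direction → ∃ y ∈ L', y ∈ Ω ∧ y ∈ line[k, p, x]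

namespace IsCentralImageLine

theorem exists_ne_mem_inf [Nontrivial kˣ] (h : IsCentralImageLine p Ω L L') (hpL : p ∉ L)
    (hpΩ : p ∉ Ω) (hxL : x ∈ L) (hvL : v ∈ L) (hx : x -ᵥ p ∉ Ω.direction)
    (hv : v -ᵥ p ∈ Ω.direction) :
    ∃ y ∈ L' ⊓ (affineSpan k (insert p (L : Set P)) ⊓ Ω),
      ∃ z ∈ L' ⊓ (affineSpan k (insert p (L : Set P)) ⊓ Ω), y ≠ z := by
  have line_le {a : P} (ha : a ∈ L) : line[k, p, a] ≤ affineSpan k (insert p (L : Set P)) :=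
    affineSpan_mono k (Set.insert_subset_insert (Set.singleton_subset_iff.2 ha))
  obtain ⟨w, hwL, hwx, hw⟩ := exists_ne_vsub_notMem_direction hxL hvL hx hv
  obtain ⟨y, hyL', hyΩ, hyx⟩ := h.exists_mem x hxL hx
  obtain ⟨z, hzL', hzΩ, hzw⟩ := h.exists_mem w hwL hw
  refine ⟨y, ⟨hyL', line_le hxL hyx, hyΩ⟩, z, ⟨hzL', line_le hwL hzw, hzΩ⟩, ?_⟩
  rintro rfl
  have hyp : y ≠ p := ne_of_mem_of_not_mem hyΩ hpΩ
  exact hwx (eq_of_mem_line_of_mem_line_s8 hpL hwL hxL hyp hzw hyx)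

theorem eq_affineSpan_insert_inf [Nontrivial kˣ] (h : IsCentralImageLine p Ω L L')
    (hL : finrank k L.direction = 1) (hpL : p ∉ L) (hpΩ : p ∉ Ω) (hxL : x ∈ L) (hvL : v ∈ L)
    (hx : x -ᵥ p ∉ Ω.direction) (hv : v -ᵥ p ∈ Ω.direction) :
    L' = affineSpan k (insert p (L : Set P)) ⊓ Ω := by
  obtain ⟨y, ⟨hyL', hy⟩, z, ⟨hzL', hz⟩, hyz⟩ := h.exists_ne_mem_inf hpL hpΩ hxL hvL hx hv
  have hdir := direction_affineSpan_insert_inf hvL hv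
    (disjoint_direction_of_vsub_notMem hL hxL hvL hx hv) ⟨y, hy⟩
  have hpv : p -ᵥ v ≠ 0 := vsub_ne_zero.2 (ne_of_mem_of_not_mem hvL hpL).symm
  exact eq_of_finrank_direction_eq_one_of_mem_of_ne h.finrank_direction
    (hdir ▸ finrank_span_singleton hpv) hyL' hy hzL' hz hyz

theorem direction_eq_span [Nontrivial kˣ] (h : IsCentralImageLine p Ω L L')
    (hL : finrank k L.direction = 1) (hpL : p ∉ L) (hpΩ : p ∉ Ω) (hxL : x ∈ L) (hvL : v ∈ L)
    (hx : x -ᵥ p ∉ Ω.direction) (hv : v -ᵥ p ∈ Ω.direction) :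
    L'.direction = Submodule.span k {p -ᵥ v} := by
  have hsection := h.eq_affineSpan_insert_inf hL hpL hpΩ hxL hvL hx hv
  have hne := nonempty_of_finrank_direction_eq_one h.finrank_direction
  rw [hsection] at hne ⊢
  exact direction_affineSpan_insert_inf hvL hv
    (disjoint_direction_of_vsub_notMem hL hxL hvL hx hv) hne

end IsCentralImageLine

theorem centralProj_images_of_lines_through_vanishing_general [Nontrivial kˣ]
    (hpΓ : p ∉ Γ) (hpΩ : p ∉ Ω)
    (hL : finrank k L.direction = 1) (hM : finrank k M.direction = 1)
    (hLΓ : L ≤ Γ) (hMΓ : M ≤ Γ) (hLM : L ≠ M)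
    (hLx : ∃ x ∈ L, x -ᵥ p ∉ Ω.direction) (hMx : ∃ x ∈ M, x -ᵥ p ∉ Ω.direction)
    (hL' : IsCentralImageLine p Ω L L') (hM' : IsCentralImageLine p Ω M M')
    (hvL : v ∈ L) (hvM : v ∈ M) (hv : v -ᵥ p ∈ Ω.direction) :
    (L' : Set P) ∩ (M' : Set P) = ∅ ∧ L' ∥ M' := by
  obtain ⟨x, hxL, hx⟩ := hLx
  obtain ⟨y, hyM, hy⟩ := hMx
  have hpL : p ∉ L := fun h ↦ hpΓ (hLΓ h)
  have hpM : p ∉ M := fun h ↦ hpΓ (hMΓ h)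
  have hdir : L'.direction = M'.direction :=
    (hL'.direction_eq_span hL hpL hpΩ hxL hvL hx hv).trans
      (hM'.direction_eq_span hM hpM hpΩ hyM hvM hy hv).symm
  refine ⟨?_, parallel_of_direction_eq_of_finrank_direction_eq_one hL'.finrank_direction hdir⟩
  have hplanes : affineSpan k (insert p (L : Set P)) ⊓ affineSpan k (insert p (M : Set P)) =
      line[k, p, v] := by
    rw [affineSpan_insert_inf_affineSpan_insert hpΓ hLΓ hMΓ hvL hvM,
      inf_eq_affineSpan_singleton_of_finrank_direction_eq_one hL hM hLM hvL hvM,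
      affineSpan_insert_affineSpan]
  rw [Set.eq_empty_iff_forall_notMem,
    hL'.eq_affineSpan_insert_inf hL hpL hpΩ hxL hvL hx hv,
    hM'.eq_affineSpan_insert_inf hM hpM hpΩ hyM hvM hy hv]
  rintro z ⟨⟨hzL, hzΩ⟩, ⟨hzM, -⟩⟩
  have hzpv : z ∈ line[k, p, v] := hplanes ▸ ⟨hzL, hzM⟩
  exact notMem_of_mem_line_of_vsub_mem_direction hpΩ hv hzpv hzΩ

end DivisionRing

section E3

variable {Γ Ω n L L' : AffineSubspace ℝ E3} {p : E3} {f : E3 → E3}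

theorem IsLine.exists_vsub_notMem_direction (hL : IsLine L) (hn : IsLine n)
    (hnvan : (n : Set E3) = {v : E3 | VanishingPt Γ Ω p v}) (hLΓ : L ≤ Γ) (hLn : L ≠ n) :
    ∃ x ∈ L, x -ᵥ p ∉ Ω.direction := by
  by_contra! hvan
  have hle : L ≤ n := fun x hx ↦ hnvan.symm.subset ⟨hLΓ hx, hvan x hx⟩
  refine hLn (eq_of_direction_eq_of_nonempty_of_le ?_ hL.1 hle)
  exact Submodule.eq_of_le_of_finrank_eq (direction_le hle) (hL.2.trans hn.2.symm)

theorem IsImageLine.isCentralImageLine (hL' : IsImageLine Γ Ω p f L L')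
    (hf : IsCentralProj Γ Ω p f) (hLΓ : L ≤ Γ) : IsCentralImageLine p Ω L L' where
  finrank_direction := hL'.1.2
  exists_mem x hxL hx := ⟨f x, hL'.2.2 x hxL hx, hf x (hLΓ hxL) hx⟩

end E3

/-- If two distinct lines `L, M ⊆ Γ` (neither equal to the vanishing line `n` of `Γ`) meet
at a vanishing point `v` of `Γ`, then their image lines `L'` and `M'` are disjoint, and
hence parallel. -/
theorem centralProj_images_of_lines_through_vanishing
    (Γ Ω : AffineSubspace ℝ E3) (p : E3) (f : E3 → E3)
    (hΓ : IsPlane Γ) (hΩ : IsPlane Ω)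
    (hnp : Γ.direction ≠ Ω.direction)
    (hpΓ : p ∉ Γ) (hpΩ : p ∉ Ω)
    (hf : IsCentralProj Γ Ω p f)
    (n : AffineSubspace ℝ E3) (hn : IsLine n)
    (hnvan : (n : Set E3) = {v : E3 | VanishingPt Γ Ω p v})
    (L M L' M' : AffineSubspace ℝ E3)
    (hL : IsLine L) (hM : IsLine M) (hLΓ : L ≤ Γ) (hMΓ : M ≤ Γ)
    (hLM : L ≠ M) (hLn : L ≠ n) (hMn : M ≠ n)
    (hL' : IsImageLine Γ Ω p f L L') (hM' : IsImageLine Γ Ω p f M M')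
    (v : E3) (hvL : v ∈ L) (hvM : v ∈ M) (hv : VanishingPt Γ Ω p v) :
    (L' : Set E3) ∩ (M' : Set E3) = ∅ ∧ L' ∥ M' := by
  have : Nontrivial ℝˣ := nontrivial_of_ne (Units.mk0 2 two_ne_zero) 1 (by simp [Units.ext_iff])
  exact centralProj_images_of_lines_through_vanishing_general hpΓ hpΩ hL.2 hM.2 hLΓ hMΓ hLM
    (hL.exists_vsub_notMem_direction hn hnvan hLΓ hLn)
    (hM.exists_vsub_notMem_direction hn hnvan hMΓ hMn)
    (hL'.isCentralImageLine hf hLΓ) (hM'.isCentralImageLine hf hMΓ) hvL hvM hv.2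
end
end

section
/- Let Γ and Ω be two non-parallel affine planes in ℝ³, let p be a point lying on neither plane, let f be the central projection from Γ to Ω through p, let n be the vanishing line of Γ and let m be the vanishing line of Ω. Let L and M be two distinct affine lines contained in Γ, both parallel to n and disjoint from n. Then the image lines L' and M' of L and M are both parallel to m; in particular L' and M' are parallel to each other. -/
noncomputable section

open scoped Affine

/-!
Let `a` be a point of `L`, with image `p + t (a - p)`, where `t ≠ 0` because `p ∉ Ω`, and let `d` be
a direction common to `Γ` and `Ω`. Then `p + t (a + d - p)` differs from the image of `a` by `t d`,
so it still lies in `Ω` and is the image of `a + d`: along `L` the projection is the homothety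
`d ↦ t d`. Both vanishing lines have direction `Γ.direction ⊓ Ω.direction`.
-/

section CentralProjection

open AffineMap AffineSubspace

variable {k V P : Type*} [DivisionRing k] [AddCommGroup V] [Module k V] [AddTorsor V P]
  {Γ Ω L : AffineSubspace k P} {p a : P} {f : P → P}

/-- The vanishing subspace of `Γ` for the central projection from `Γ` to `Ω` through `p`: the
intersection of `Γ` with the translate of `Ω` through `p`, possibly empty. When `Γ` and `Ω` are
non-parallel planes in `ℝ³`, this is the vanishing line of `Γ`. -/
def vanishingSubspace (Γ Ω : AffineSubspace k P) (p : P) : AffineSubspace k P :=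
  Γ ⊓ mk' p Ω.direction

/-- The central projection from `Γ` to `Ω` through `p`, for affine subspaces of any dimension in an
affine space over a division ring; as for `IsCentralProj`, the values of `f` at vanishing points
and outside `Γ` are arbitrary. -/
def IsCentralProjection (Γ Ω : AffineSubspace k P) (p : P) (f : P → P) : Prop :=
  ∀ a ∈ Γ, a -ᵥ p ∉ Ω.direction → f a ∈ Ω ∧ f a ∈ affineSpan k {p, a}

theorem mem_vanishingSubspace {v : P} :
    v ∈ vanishingSubspace Γ Ω p ↔ v ∈ Γ ∧ v -ᵥ p ∈ Ω.direction := by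
  rw [vanishingSubspace, mem_inf_iff, mem_mk']

theorem direction_vanishingSubspace (h : (vanishingSubspace Γ Ω p : Set P).Nonempty) :
    (vanishingSubspace Γ Ω p).direction = Γ.direction ⊓ Ω.direction := by
  obtain ⟨v, hv⟩ := h
  rw [vanishingSubspace, direction_inf_of_mem_inf hv, direction_mk']

theorem vanishingSubspace_nonempty_swap {t : k}
    (h : (vanishingSubspace Γ Ω p : Set P).Nonempty) (ha : a ∈ Γ) (hat : lineMap p a t ∈ Ω) :
    (vanishingSubspace Ω Γ p : Set P).Nonempty := by
  obtain ⟨v, hv⟩ := h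
  obtain ⟨hvΓ, hvΩ⟩ := mem_vanishingSubspace.1 hv
  have hu : t • (a -ᵥ v) +ᵥ p = -(t • (v -ᵥ p)) +ᵥ lineMap p a t := by
    rw [lineMap_apply, vadd_vadd, ← vsub_sub_vsub_cancel_right a v p, smul_sub, sub_eq_neg_add]
  refine ⟨t • (a -ᵥ v) +ᵥ p, mem_vanishingSubspace.2 ⟨?_, ?_⟩⟩
  · rw [hu]
    exact vadd_mem_of_mem_direction (neg_mem (Ω.direction.smul_mem t hvΩ)) hat
  · rw [vadd_vsub]
    exact Γ.direction.smul_mem t (vsub_mem_direction ha hvΓ)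

theorem eq_of_lineMap_mem {s t : k} (ha : a -ᵥ p ∉ Ω.direction) (hs : lineMap p a s ∈ Ω)
    (ht : lineMap p a t ∈ Ω) : s = t := by
  have hst : (s - t) • (a -ᵥ p) ∈ Ω.direction := by
    simpa only [lineMap_apply, vadd_vsub_vadd_cancel_right, ← sub_smul]
      using vsub_mem_direction hs ht
  by_contra hne
  exact ha ((Submodule.smul_mem_iff _ (sub_ne_zero.2 hne)).1 hst)

namespace IsCentralProjection

theorem exists_eq_lineMap (hf : IsCentralProjection Γ Ω p f) (ha : a ∈ Γ)
    (hav : a -ᵥ p ∉ Ω.direction) : ∃ t : k, f a = lineMap p a t := by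
  obtain ⟨t, ht⟩ := mem_affineSpan_pair_iff_exists_lineMap_eq.1 (hf a ha hav).2
  exact ⟨t, ht.symm⟩

theorem eq_lineMap_of_mem {t : k} (hf : IsCentralProjection Γ Ω p f) (ha : a ∈ Γ)
    (hav : a -ᵥ p ∉ Ω.direction) (ht : lineMap p a t ∈ Ω) : f a = lineMap p a t := by
  obtain ⟨s, hs⟩ := hf.exists_eq_lineMap ha hav
  have hsΩ : lineMap p a s ∈ Ω := hs ▸ (hf a ha hav).1
  rw [hs, eq_of_lineMap_mem hav hsΩ ht]

theorem exists_forall_apply_vadd (hf : IsCentralProjection Γ Ω p f) (hp : p ∉ Ω) (ha : a ∈ Γ)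
    (hav : a -ᵥ p ∉ Ω.direction) :
    ∃ t : k, t ≠ 0 ∧ ∀ d ∈ Γ.direction ⊓ Ω.direction, f (d +ᵥ a) = t • d +ᵥ f a := by
  obtain ⟨t, hat⟩ := hf.exists_eq_lineMap ha hav
  have hfa : f a ∈ Ω := (hf a ha hav).1
  refine ⟨t, ?_, ?_⟩
  · rintro rfl
    rw [hat, lineMap_apply_zero] at hfa
    exact hp hfa
  · rintro d ⟨hdΓ, hdΩ⟩
    have hline : lineMap p (d +ᵥ a) t = t • d +ᵥ f a := by
      rw [hat, lineMap_apply, lineMap_apply, vadd_vsub_assoc, smul_add, vadd_vadd]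
    have hdav : (d +ᵥ a) -ᵥ p ∉ Ω.direction := by
      rwa [vadd_vsub_assoc, Submodule.add_mem_iff_right _ hdΩ]
    rw [← hline]
    refine hf.eq_lineMap_of_mem (vadd_mem_of_mem_direction hdΓ ha) hdav ?_
    rw [hline]
    exact vadd_mem_of_mem_direction (Ω.direction.smul_mem t hdΩ) hfa

theorem image_eq_mk' (hf : IsCentralProjection Γ Ω p f) (hp : p ∉ Ω) (hLΓ : L ≤ Γ)
    (hLΩ : L.direction ≤ Ω.direction) (ha : a ∈ L) (hav : a -ᵥ p ∉ Ω.direction) :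
    f '' L = mk' (f a) L.direction := by
  obtain ⟨t, ht, hft⟩ := hf.exists_forall_apply_vadd hp (hLΓ ha) hav
  have hfL : ∀ d ∈ L.direction, f (d +ᵥ a) = t • d +ᵥ f a := fun d hd =>
    hft d ⟨direction_le hLΓ hd, hLΩ hd⟩
  apply Set.Subset.antisymm
  · rintro _ ⟨x, hx, rfl⟩
    have hxa : x -ᵥ a ∈ L.direction := vsub_mem_direction hx ha
    rw [← vsub_vadd x a, hfL _ hxa]
    exact vadd_mem_mk' _ (L.direction.smul_mem t hxa)
  · intro y hy
    have hd : t⁻¹ • (y -ᵥ f a) ∈ L.direction := L.direction.smul_mem _ (mem_mk'.1 hy)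
    exact ⟨t⁻¹ • (y -ᵥ f a) +ᵥ a, vadd_mem_of_mem_direction hd ha, by
      rw [hfL _ hd, smul_inv_smul₀ ht, vsub_vadd]⟩

end IsCentralProjection

theorem centralProj_images_of_lines_parallel_to_vanishing_general
    (hf : IsCentralProjection Γ Ω p f) (hp : p ∉ Ω) (hL : (L : Set P).Nonempty) (hLΓ : L ≤ Γ)
    (hpar : L ∥ vanishingSubspace Γ Ω p)
    (hdisj : Disjoint (L : Set P) (vanishingSubspace Γ Ω p)) :
    ∃ K : AffineSubspace k P, (K : Set P) = f '' L ∧ K ∥ vanishingSubspace Ω Γ p := by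
  obtain ⟨a, ha⟩ := hL
  have hav : a -ᵥ p ∉ Ω.direction := fun h =>
    Set.disjoint_left.1 hdisj ha (mem_vanishingSubspace.2 ⟨hLΓ ha, h⟩)
  have hn : (vanishingSubspace Γ Ω p : Set P).Nonempty := by
    obtain ⟨v, hv⟩ := hpar
    exact ⟨v +ᵥ a, hv ▸ mem_map_of_mem _ ha⟩
  have hm : (vanishingSubspace Ω Γ p : Set P).Nonempty := by
    obtain ⟨t, ht⟩ := hf.exists_eq_lineMap (hLΓ ha) hav
    exact vanishingSubspace_nonempty_swap hn (hLΓ ha) (ht ▸ (hf a (hLΓ ha) hav).1)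
  have hdir : L.direction = Γ.direction ⊓ Ω.direction :=
    hpar.direction_eq.trans (direction_vanishingSubspace hn)
  refine ⟨mk' (f a) L.direction,
    (hf.image_eq_mk' hp hLΓ (hdir.le.trans inf_le_right) ha hav).symm, ?_⟩
  rw [parallel_iff_direction_eq_and_eq_bot_iff_eq_bot, direction_mk', hdir,
    direction_vanishingSubspace hm, inf_comm]
  exact ⟨rfl, iff_of_false ((nonempty_iff_ne_bot _).1 (mk'_nonempty _ _))
    ((nonempty_iff_ne_bot _).1 hm)⟩

end CentralProjection

theorem IsLine.of_parallel {A B : AffineSubspace ℝ E3} (hB : IsLine B) (h : A ∥ B) : IsLine A := by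
  obtain ⟨v, rfl⟩ := h.symm
  exact ⟨hB.1.image _, h.direction_eq ▸ hB.2⟩

theorem IsLine.eq_of_le {A B : AffineSubspace ℝ E3} (hA : IsLine A) (hB : IsLine B) (h : A ≤ B) :
    A = B :=
  AffineSubspace.eq_of_direction_eq_of_nonempty_of_le
    (Submodule.eq_of_le_of_finrank_eq (AffineSubspace.direction_le h) (hA.2.trans hB.2.symm))
    hA.1 h

theorem IsImageLine.parallel_vanishingSubspace {Γ Ω L L' : AffineSubspace ℝ E3} {p : E3}
    {f : E3 → E3} (hL' : IsImageLine Γ Ω p f L L') (hf : IsCentralProj Γ Ω p f) (hp : p ∉ Ω)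
    (hm : IsLine (vanishingSubspace Ω Γ p)) (hL : IsLine L) (hLΓ : L ≤ Γ)
    (hpar : L ∥ vanishingSubspace Γ Ω p)
    (hdisj : (L : Set E3) ∩ vanishingSubspace Γ Ω p = ∅) :
    L' ∥ vanishingSubspace Ω Γ p := by
  obtain ⟨K, hKL, hKm⟩ := centralProj_images_of_lines_parallel_to_vanishing_general hf hp hL.1 hLΓ
    hpar (Set.disjoint_iff_inter_eq_empty.2 hdisj)
  have hKL' : K ≤ L' := by
    intro y hy
    obtain ⟨x, hx, rfl⟩ : y ∈ f '' L := hKL ▸ hy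
    have hxn : x ∉ vanishingSubspace Γ Ω p := fun h => (hdisj ▸ ⟨hx, h⟩ : x ∈ (∅ : Set E3))
    exact hL'.2.2 x hx fun h => hxn (mem_vanishingSubspace.2 ⟨hLΓ hx, h⟩)
  exact (hm.of_parallel hKm).eq_of_le hL'.1 hKL' ▸ hKm

/-- If two distinct lines `L, M ⊆ Γ` are parallel to and disjoint from the vanishing line
`n` of `Γ`, then their image lines `L'` and `M'` are both parallel to the vanishing line
`m` of `Ω`; in particular `L'` and `M'` are parallel to each other. -/
theorem centralProj_images_of_lines_parallel_to_vanishing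
    (Γ Ω : AffineSubspace ℝ E3) (p : E3) (f : E3 → E3)
    (hΓ : IsPlane Γ) (hΩ : IsPlane Ω)
    (hnp : Γ.direction ≠ Ω.direction)
    (hpΓ : p ∉ Γ) (hpΩ : p ∉ Ω)
    (hf : IsCentralProj Γ Ω p f)
    (n : AffineSubspace ℝ E3) (hn : IsLine n)
    (hnvan : (n : Set E3) = {v : E3 | VanishingPt Γ Ω p v})
    (m : AffineSubspace ℝ E3) (hm : IsLine m)
    (hmvan : (m : Set E3) = {u : E3 | VanishingPt Ω Γ p u})
    (L M L' M' : AffineSubspace ℝ E3)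
    (hL : IsLine L) (hM : IsLine M) (hLΓ : L ≤ Γ) (hMΓ : M ≤ Γ)
    (hLM : L ≠ M)
    (hLpar : L ∥ n) (hMpar : M ∥ n)
    (hLdisj : (L : Set E3) ∩ (n : Set E3) = ∅)
    (hMdisj : (M : Set E3) ∩ (n : Set E3) = ∅)
    (hL' : IsImageLine Γ Ω p f L L') (hM' : IsImageLine Γ Ω p f M M') :
    L' ∥ m ∧ M' ∥ m ∧ L' ∥ M' := by
  obtain rfl : n = vanishingSubspace Γ Ω p := SetLike.coe_injective hnvan
  obtain rfl : m = vanishingSubspace Ω Γ p := SetLike.coe_injective hmvan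
  have hL'm := hL'.parallel_vanishingSubspace hf hpΩ hm hL hLΓ hLpar hLdisj
  have hM'm := hM'.parallel_vanishingSubspace hf hpΩ hm hM hMΓ hMpar hMdisj
  exact ⟨hL'm, hM'm, hL'm.trans hM'm.symm⟩
end
end

section
/- Let Γ and Ω be two non-parallel affine planes in ℝ³, let p be a point lying on neither plane, and let f be the central projection from Γ to Ω through p. If a and b are points of Γ such that the closed segment from a to b contains no vanishing point of Γ, then the image under f of the closed segment from a to b is exactly the closed segment from f(a) to f(b). -/
noncomputable section

/-!
Along their lines of sight, `a = p + α (a' - p)` and `b = p + β (b' - p)`, where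
`a'`, `b'` are their images in `Ω`. Modulo the direction of `Ω`, the vector from `p` to the point
`(1 - r) a + r b` is `(1 - r) α + r β` times `a' - p`, so this point is a vanishing point exactly
when that number is zero. If this never happens on the segment, `α` and `β` have the same sign. The
projection multiplies the barycentric weights `1 - r`, `r` by `α`, `β` and renormalises them, which
is a bijection of `[0, 1]` onto itself, inverted by exchanging `α` and `β`.
-/

open AffineMap Set

section Reweight

variable {𝕜 : Type*} [Field 𝕜]

/-- The second barycentric coordinate after the coordinates `(1 - r, r)` have been multiplied by
`(α, β)` and renormalised: a projective map of the line in the parameter `r`. Its denominator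
`lineMap α β r` is `(1 - r) * α + r * β`; where that vanishes the value is the junk value `0`. -/
def reweight (α β r : 𝕜) : 𝕜 :=
  r * β / lineMap α β r

theorem one_sub_reweight {α β r : 𝕜} (h : lineMap α β r ≠ 0) :
    1 - reweight α β r = reweight β α (1 - r) := by
  rw [reweight, reweight, lineMap_apply_one_sub, one_sub_div h, lineMap_apply_ring]
  ring

theorem lineMap_reweight {α β r : 𝕜} (h : lineMap β α r ≠ 0) :
    lineMap α β (reweight β α r) = α * β / lineMap β α r := by
  rw [lineMap_apply_ring, one_sub_reweight h, reweight, reweight, lineMap_apply_one_sub]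
  ring

theorem reweight_reweight {α β r : 𝕜} (hαβ : α * β ≠ 0) (h : lineMap β α r ≠ 0) :
    reweight α β (reweight β α r) = r := by
  rw [reweight, lineMap_reweight h, reweight, div_mul_eq_mul_div, div_div_div_cancel_right₀ h,
    mul_assoc, mul_div_cancel_right₀ r hαβ]

variable [LinearOrder 𝕜] [IsStrictOrderedRing 𝕜]

theorem forall_lineMap_ne_zero_iff_mul_pos {α β : 𝕜} :
    (∀ r ∈ Icc (0 : 𝕜) 1, lineMap α β r ≠ 0) ↔ 0 < α * β := by
  have huIcc : 0 ∈ uIcc α β ↔ α * β ≤ 0 := by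
    rw [mem_uIcc, mul_nonpos_iff, or_comm, and_comm (a := β ≤ 0)]
  rw [← not_le, ← huIcc, ← segment_eq_uIcc, segment_eq_image_lineMap]
  simp only [mem_image, not_exists, not_and, ne_eq]

theorem reweight_nonneg {α β r : 𝕜} (hαβ : 0 < α * β) (hr : r ∈ Icc 0 1) :
    0 ≤ reweight α β r := by
  have hr' : 0 ≤ 1 - r := sub_nonneg.2 hr.2
  rw [reweight, lineMap_apply_ring]
  rcases pos_and_pos_or_neg_and_neg_of_mul_pos hαβ with ⟨hα, hβ⟩ | ⟨hα, hβ⟩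
  · exact div_nonneg (mul_nonneg hr.1 hβ.le)
      (add_nonneg (mul_nonneg hr' hα.le) (mul_nonneg hr.1 hβ.le))
  · exact div_nonneg_of_nonpos (mul_nonpos_of_nonneg_of_nonpos hr.1 hβ.le)
      (add_nonpos (mul_nonpos_of_nonneg_of_nonpos hr' hα.le)
        (mul_nonpos_of_nonneg_of_nonpos hr.1 hβ.le))

theorem reweight_mapsTo_Icc {α β : 𝕜} (hαβ : 0 < α * β) :
    MapsTo (reweight α β) (Icc 0 1) (Icc 0 1) := fun r hr ↦ by
  refine ⟨reweight_nonneg hαβ hr, sub_nonneg.1 ?_⟩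
  rw [one_sub_reweight (forall_lineMap_ne_zero_iff_mul_pos.2 hαβ r hr)]
  exact reweight_nonneg (mul_comm α β ▸ hαβ) (Icc.mem_iff_one_sub_mem.1 hr)

theorem reweight_image_Icc {α β : 𝕜} (hαβ : 0 < α * β) :
    reweight α β '' Icc 0 1 = Icc 0 1 := by
  have hβα : 0 < β * α := mul_comm α β ▸ hαβ
  have hinv : RightInvOn (reweight β α) (reweight α β) (Icc 0 1) := fun r hr ↦
    reweight_reweight hαβ.ne' (forall_lineMap_ne_zero_iff_mul_pos.2 hβα r hr)
  exact (hinv.surjOn (reweight_mapsTo_Icc hβα)).image_eq_of_mapsTo (reweight_mapsTo_Icc hαβ)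

end Reweight

section Projection

variable {𝕜 V P : Type*} [Field 𝕜] [AddCommGroup V] [Module 𝕜 V] [AddTorsor V P]
  {Ω : AffineSubspace 𝕜 P} {p a b x : P} {α β r : 𝕜}

theorem lineMap_lineMap_lineMap_vsub (p a b : P) (α β r : 𝕜) :
    lineMap (lineMap p a α) (lineMap p b β) r -ᵥ p =
      lineMap α β r • (a -ᵥ p) + (r * β) • (b -ᵥ a) := by
  rw [← vsub_sub_vsub_cancel_right b a p, lineMap_apply_ring, lineMap_apply, vadd_vsub_assoc,
    ← vsub_sub_vsub_cancel_right (lineMap p b β) _ p, lineMap_vsub_left, lineMap_vsub_left]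
  module

theorem lineMap_lineMap_lineMap_eq_lineMap_reweight (p a b : P) (h : lineMap α β r ≠ 0) :
    lineMap (lineMap p a α) (lineMap p b β) r =
      lineMap p (lineMap a b (reweight α β r)) (lineMap α β r) := by
  rw [← vsub_left_cancel_iff (p := p), lineMap_lineMap_lineMap_vsub, lineMap_vsub_left,
    lineMap_apply a b, vadd_vsub_assoc, smul_add, smul_smul, reweight, mul_div_cancel₀ _ h,
    add_comm]

theorem lineMap_ne_zero_of_vsub_notMem_direction (ha : a ∈ Ω) (hb : b ∈ Ω)
    (h : lineMap (lineMap p a α) (lineMap p b β) r -ᵥ p ∉ Ω.direction) : lineMap α β r ≠ 0 := by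
  contrapose! h
  rw [lineMap_lineMap_lineMap_vsub, h, zero_smul, zero_add]
  exact Ω.direction.smul_mem _ (AffineSubspace.vsub_mem_direction hb ha)

theorem eq_of_mem_of_mem_affineSpan_pair_of_vsub_notMem_direction {q q' : P}
    (hx : x -ᵥ p ∉ Ω.direction) (hq : q ∈ Ω) (hqx : q ∈ line[𝕜, p, x])
    (hq' : q' ∈ Ω) (hqx' : q' ∈ line[𝕜, p, x]) : q = q' := by
  obtain ⟨t, rfl⟩ := mem_affineSpan_pair_iff_exists_lineMap_eq.1 hqx
  obtain ⟨t', rfl⟩ := mem_affineSpan_pair_iff_exists_lineMap_eq.1 hqx'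
  have hdir : (t - t') • (x -ᵥ p) ∈ Ω.direction := by
    rw [sub_smul, ← lineMap_vsub_left, ← lineMap_vsub_left, vsub_sub_vsub_cancel_right]
    exact AffineSubspace.vsub_mem_direction hq hq'
  have ht : t = t' := by
    by_contra hne
    exact hx ((Ω.direction.smul_mem_iff (sub_ne_zero.2 hne)).1 hdir)
  rw [ht]

theorem mem_affineSpan_pair_of_mem_of_ne {q : P} (hq : q ∈ line[𝕜, p, x]) (hqp : q ≠ p) :
    x ∈ line[𝕜, p, q] := by
  rw [affineSpan_pair_eq_of_right_mem_of_ne hq hqp]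
  exact right_mem_affineSpan_pair 𝕜 p x

theorem eq_lineMap_reweight_of_mem_of_mem_affineSpan_pair {q : P} (ha : a ∈ Ω) (hb : b ∈ Ω)
    (hx : lineMap (lineMap p a α) (lineMap p b β) r = x) (hxp : x -ᵥ p ∉ Ω.direction)
    (hq : q ∈ Ω) (hqx : q ∈ line[𝕜, p, x]) : q = lineMap a b (reweight α β r) := by
  have hne : lineMap α β r ≠ 0 := lineMap_ne_zero_of_vsub_notMem_direction ha hb (hx ▸ hxp)
  have hx_ne : x ≠ p := by
    rintro rfl
    exact hxp (by simp)
  have hx_mem : x ∈ line[𝕜, p, lineMap a b (reweight α β r)] := by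
    rw [← hx, lineMap_lineMap_lineMap_eq_lineMap_reweight p a b hne]
    exact lineMap_mem_affineSpan_pair (lineMap α β r) p (lineMap a b (reweight α β r))
  exact eq_of_mem_of_mem_affineSpan_pair_of_vsub_notMem_direction hxp hq hqx
    (lineMap_mem _ ha hb) (mem_affineSpan_pair_of_mem_of_ne hx_mem hx_ne)

variable [LinearOrder 𝕜] [IsStrictOrderedRing 𝕜]

theorem centralProj_image_segment_general {f : P → P} (hp : p ∉ Ω)
    (hdir : ∀ x ∈ affineSegment 𝕜 a b, x -ᵥ p ∉ Ω.direction)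
    (hfΩ : ∀ x ∈ affineSegment 𝕜 a b, f x ∈ Ω)
    (hfl : ∀ x ∈ affineSegment 𝕜 a b, f x ∈ line[𝕜, p, x]) :
    f '' affineSegment 𝕜 a b = affineSegment 𝕜 (f a) (f b) := by
  have hsight : ∀ x ∈ affineSegment 𝕜 a b, ∃ t : 𝕜, lineMap p (f x) t = x := fun x hx ↦
    mem_affineSpan_pair_iff_exists_lineMap_eq.1 <|
      mem_affineSpan_pair_of_mem_of_ne (hfl x hx) (ne_of_mem_of_not_mem (hfΩ x hx) hp)
  have ha := left_mem_affineSegment 𝕜 a b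
  have hb := right_mem_affineSegment 𝕜 a b
  obtain ⟨α, hα⟩ := hsight a ha
  obtain ⟨β, hβ⟩ := hsight b hb
  have hx : ∀ r : 𝕜, lineMap (lineMap p (f a) α) (lineMap p (f b) β) r = lineMap a b r := by
    simp only [hα, hβ, implies_true]
  have hmem : ∀ r ∈ Icc (0 : 𝕜) 1, lineMap a b r ∈ affineSegment 𝕜 a b := fun r hr ↦
    mem_image_of_mem _ hr
  have hne : ∀ r ∈ Icc (0 : 𝕜) 1, lineMap α β r ≠ 0 := fun r hr ↦
    lineMap_ne_zero_of_vsub_notMem_direction (hfΩ a ha) (hfΩ b hb)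
      ((hx r).symm ▸ hdir _ (hmem r hr))
  have hf : ∀ r ∈ Icc (0 : 𝕜) 1, f (lineMap a b r) = lineMap (f a) (f b) (reweight α β r) :=
    fun r hr ↦ eq_lineMap_reweight_of_mem_of_mem_affineSpan_pair (hfΩ a ha) (hfΩ b hb) (hx r)
      (hdir _ (hmem r hr)) (hfΩ _ (hmem r hr)) (hfl _ (hmem r hr))
  calc f '' affineSegment 𝕜 a b
      = (fun r ↦ f (lineMap a b r)) '' Icc 0 1 := image_image _ _ _
    _ = (fun r ↦ lineMap (f a) (f b) (reweight α β r)) '' Icc 0 1 := image_congr hf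
    _ = lineMap (f a) (f b) '' (reweight α β '' Icc 0 1) := (image_image _ _ _).symm
    _ = affineSegment 𝕜 (f a) (f b) := by
        rw [reweight_image_Icc (forall_lineMap_ne_zero_iff_mul_pos.1 hne), affineSegment]

end Projection

/-- If `f` is the central projection from `Γ` to `Ω` through `p` and the closed segment
between the points `a, b ∈ Γ` contains no vanishing point of `Γ`, then the image under
`f` of the closed segment from `a` to `b` is exactly the closed segment from `f a` to
`f b`. -/
theorem centralProj_image_segment
    (Γ Ω : AffineSubspace ℝ E3) (p : E3) (f : E3 → E3)
    (hΓ : IsPlane Γ) (hΩ : IsPlane Ω)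
    (hnp : Γ.direction ≠ Ω.direction)
    (hpΓ : p ∉ Γ) (hpΩ : p ∉ Ω)
    (hf : IsCentralProj Γ Ω p f)
    (a b : E3) (ha : a ∈ Γ) (hb : b ∈ Γ)
    (hnv : ∀ x ∈ segment ℝ a b, ¬ VanishingPt Γ Ω p x) :
    f '' segment ℝ a b = segment ℝ (f a) (f b) := by
  have hmem : ∀ x ∈ segment ℝ a b, x ∈ Γ ∧ x -ᵥ p ∉ Ω.direction := fun x hx ↦
    have hxΓ : x ∈ Γ := Γ.convex.segment_subset ha hb hx
    ⟨hxΓ, fun hdir ↦ hnv x hx ⟨hxΓ, hdir⟩⟩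
  simp only [← affineSegment_eq_segment] at hmem ⊢
  exact centralProj_image_segment_general hpΩ (fun x hx ↦ (hmem x hx).2)
    (fun x hx ↦ (hf x (hmem x hx).1 (hmem x hx).2).1)
    (fun x hx ↦ (hf x (hmem x hx).1 (hmem x hx).2).2)
end
end

section
/- Let Γ and Ω be two non-parallel affine planes in ℝ³, let p be a point lying on neither plane, and let f be the central projection from Γ to Ω through p. Let a, b, c, d be points of Γ such that the closed segments from a to b and from c to d contain no vanishing point of Γ. Then the closed segments from a to b and from c to d are disjoint if and only if the closed segments from f(a) to f(b) and from f(c) to f(d) are disjoint. -/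
noncomputable section

/-!
Choose affine functionals `φ` and `ψ` vanishing at `p` with `φ = 1` on `Ω` and `ψ = 1` on `Γ`. The
projection onto `Ω` is `x ↦ p + (φ x)⁻¹ (x - p)`, and the same formula with `ψ` inverts it on `Γ`.
On a segment without vanishing points `φ` has constant sign, so the projection of a convex
combination of the endpoints is again a convex combination of their projections, with weights
rescaled by values of `φ`. Hence a common point of two segments projects to a common point of their
images, and the inverse projection gives the converse.
-/

section Projection

variable {𝕜 V P : Type*} [Field 𝕜] [AddCommGroup V] [Module 𝕜 V] [AddTorsor V P]

/-- The central projection through `p` onto the hyperplane `{φ = 1}`, for an affine functional `φ`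
vanishing at `p`. It takes the junk value `p` on the vanishing hyperplane `{φ = 0}`. -/
def centralProj (φ : P →ᵃ[𝕜] 𝕜) (p x : P) : P :=
  AffineMap.lineMap p x (φ x)⁻¹

theorem exists_affineMap_apply_eq_zero_and_eqOn_one {s : AffineSubspace 𝕜 P} {p : P}
    (hp : p ∉ s) : ∃ φ : P →ᵃ[𝕜] 𝕜, φ p = 0 ∧ Set.EqOn φ 1 s := by
  obtain rfl | ⟨q, hq⟩ := s.eq_bot_or_nonempty
  · exact ⟨0, rfl, fun x hx => (AffineSubspace.notMem_bot 𝕜 V x hx).elim⟩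
  have hqp : q -ᵥ p ∉ s.direction := by
    rwa [AffineSubspace.vsub_left_mem_direction_iff_mem hq]
  obtain ⟨l, hl, hle⟩ := Submodule.exists_le_ker_of_notMem hqp
  refine ⟨((l (q -ᵥ p))⁻¹ • l).toAffineMap.comp (AffineEquiv.vaddConst 𝕜 p).symm.toAffineMap,
    by simp, fun x hx => ?_⟩
  have hlx : l (x -ᵥ p) = l (q -ᵥ p) := by
    rw [← vsub_add_vsub_cancel x q p, map_add,
      LinearMap.mem_ker.1 (hle (AffineSubspace.vsub_mem_direction hx hq)), zero_add]
  simp [hlx, hl]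

theorem apply_lineMap_of_apply_left_eq_zero {φ : P →ᵃ[𝕜] 𝕜} {p : P} (hp : φ p = 0) (x : P)
    (r : 𝕜) : φ (AffineMap.lineMap p x r) = r * φ x := by
  simp only [AffineMap.apply_lineMap, hp, AffineMap.lineMap_apply_ring', sub_zero, add_zero]

theorem apply_centralProj {φ ψ : P →ᵃ[𝕜] 𝕜} {p x : P} (hψp : ψ p = 0) (hψx : ψ x = 1) :
    ψ (centralProj φ p x) = (φ x)⁻¹ := by
  rw [centralProj, apply_lineMap_of_apply_left_eq_zero hψp, hψx, mul_one]

theorem centralProj_centralProj {φ ψ : P →ᵃ[𝕜] 𝕜} {p x : P} (hψp : ψ p = 0) (hψx : ψ x = 1)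
    (hφx : φ x ≠ 0) : centralProj ψ p (centralProj φ p x) = x := by
  rw [centralProj, apply_centralProj hψp hψx, inv_inv, centralProj,
    AffineMap.lineMap_lineMap_right, mul_inv_cancel₀ hφx, AffineMap.lineMap_apply_one]

theorem apply_ne_zero_of_mem_line {φ : P →ᵃ[𝕜] 𝕜} {p x y : P} (hp : φ p = 0)
    (hy : y ∈ line[𝕜, p, x]) (hφy : φ y = 1) : φ x ≠ 0 := by
  obtain ⟨r, rfl⟩ := mem_affineSpan_pair_iff_exists_lineMap_eq.1 hy
  rw [apply_lineMap_of_apply_left_eq_zero hp] at hφy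
  exact right_ne_zero_of_mul_eq_one hφy

theorem eq_centralProj_of_mem_line {φ : P →ᵃ[𝕜] 𝕜} {p x y : P} (hp : φ p = 0)
    (hy : y ∈ line[𝕜, p, x]) (hφy : φ y = 1) : y = centralProj φ p x := by
  obtain ⟨r, rfl⟩ := mem_affineSpan_pair_iff_exists_lineMap_eq.1 hy
  rw [apply_lineMap_of_apply_left_eq_zero hp] at hφy
  rw [centralProj, eq_inv_of_mul_eq_one_left hφy]

end Projection

section Segment

variable {𝕜 V : Type*} [Field 𝕜] [LinearOrder 𝕜] [IsStrictOrderedRing 𝕜] [AddCommGroup V]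
  [Module 𝕜 V]

theorem apply_mul_apply_pos_of_forall_segment_ne_zero {φ : V →ᵃ[𝕜] 𝕜} {x y : V}
    (h : ∀ z ∈ segment 𝕜 x y, φ z ≠ 0) : 0 < φ x * φ y := by
  have h0 : (0 : 𝕜) ∉ Set.uIcc (φ x) (φ y) := by
    rw [← segment_eq_uIcc, ← image_segment]
    rintro ⟨z, hz, hz0⟩
    exact h z hz hz0
  contrapose! h0
  rw [Set.mem_uIcc]
  obtain h | h := mul_nonpos_iff.1 h0
  exacts [.inr h.symm, .inl h]

theorem apply_div_apply_pos_of_mem_segment {φ : V →ᵃ[𝕜] 𝕜} {x y z : V} (hxy : 0 < φ x * φ y)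
    (hz : z ∈ segment 𝕜 x y) : 0 < φ x / φ z := by
  have hx : 0 < φ x * φ x := mul_self_pos.2 (left_ne_zero_of_mul hxy.ne')
  have hxz : 0 < φ x * φ z :=
    ((convex_Ioi 0).affine_preimage (φ x • φ)).segment_subset hx hxy hz
  exact div_pos_iff.2 (mul_pos_iff.1 hxz)

theorem centralProj_mem_segment {φ : V →ᵃ[𝕜] 𝕜} {x y z : V} (p : V) (hxy : 0 < φ x * φ y)
    (hz : z ∈ segment 𝕜 x y) :
    centralProj φ p z ∈ segment 𝕜 (centralProj φ p x) (centralProj φ p y) := by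
  have hφx : φ x ≠ 0 := left_ne_zero_of_mul hxy.ne'
  have hφy : φ y ≠ 0 := right_ne_zero_of_mul hxy.ne'
  have hxz : 0 < φ x / φ z := apply_div_apply_pos_of_mem_segment hxy hz
  have hyz : 0 < φ y / φ z :=
    apply_div_apply_pos_of_mem_segment (mul_comm (φ x) _ ▸ hxy) (segment_symm 𝕜 x y ▸ hz)
  have hφz : φ z ≠ 0 := (div_ne_zero_iff.1 hxz.ne').2
  obtain ⟨u, v, hu, hv, huv, rfl⟩ := hz
  have hφ : φ (u • x + v • y) = u * φ x + v * φ y := Convex.combo_affine_apply huv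
  refine ⟨u * (φ x / φ (u • x + v • y)), v * (φ y / φ (u • x + v • y)), by positivity,
    by positivity, ?_, ?_⟩
  · field_simp
    exact hφ.symm
  · simp only [centralProj, AffineMap.lineMap_apply_module']
    generalize φ (u • x + v • y) = w at *
    obtain rfl : v = 1 - u := by linarith
    match_scalars <;> field_simp
    grind

theorem nonempty_centralProj_segment_inter {φ : V →ᵃ[𝕜] 𝕜} {a b c d : V} (p : V)
    (hab : 0 < φ a * φ b) (hcd : 0 < φ c * φ d)
    (h : (segment 𝕜 a b ∩ segment 𝕜 c d).Nonempty) :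
    (segment 𝕜 (centralProj φ p a) (centralProj φ p b) ∩
      segment 𝕜 (centralProj φ p c) (centralProj φ p d)).Nonempty :=
  let ⟨_, hzab, hzcd⟩ := h
  ⟨_, centralProj_mem_segment p hab hzab, centralProj_mem_segment p hcd hzcd⟩

theorem nonempty_centralProj_segment_inter_iff {φ ψ : V →ᵃ[𝕜] 𝕜} {p a b c d : V}
    (hψp : ψ p = 0) (ha : ψ a = 1) (hb : ψ b = 1) (hc : ψ c = 1) (hd : ψ d = 1)
    (hab : 0 < φ a * φ b) (hcd : 0 < φ c * φ d) :
    (segment 𝕜 (centralProj φ p a) (centralProj φ p b) ∩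
        segment 𝕜 (centralProj φ p c) (centralProj φ p d)).Nonempty ↔
      (segment 𝕜 a b ∩ segment 𝕜 c d).Nonempty := by
  refine ⟨fun h => ?_, nonempty_centralProj_segment_inter p hab hcd⟩
  have hpos : ∀ {x y : V}, ψ x = 1 → ψ y = 1 → 0 < φ x * φ y →
      0 < ψ (centralProj φ p x) * ψ (centralProj φ p y) := fun hx hy hxy => by
    rw [apply_centralProj hψp hx, apply_centralProj hψp hy, ← mul_inv]
    exact inv_pos.2 hxy
  have h' := nonempty_centralProj_segment_inter p (hpos ha hb hab) (hpos hc hd hcd) h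
  rwa [centralProj_centralProj hψp ha (left_ne_zero_of_mul hab.ne'),
    centralProj_centralProj hψp hb (right_ne_zero_of_mul hab.ne'),
    centralProj_centralProj hψp hc (left_ne_zero_of_mul hcd.ne'),
    centralProj_centralProj hψp hd (right_ne_zero_of_mul hcd.ne')] at h'

end Segment

theorem centralProj_disjoint_segments_general {𝕜 V : Type*} [Field 𝕜] [LinearOrder 𝕜]
    [IsStrictOrderedRing 𝕜] [AddCommGroup V] [Module 𝕜 V] {Γ Ω : AffineSubspace 𝕜 V} {p : V}
    {f : V → V} (hpΓ : p ∉ Γ) (hpΩ : p ∉ Ω)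
    (hf : ∀ x ∈ Γ, x -ᵥ p ∉ Ω.direction → f x ∈ Ω ∧ f x ∈ line[𝕜, p, x])
    {a b c d : V} (ha : a ∈ Γ) (hb : b ∈ Γ) (hc : c ∈ Γ) (hd : d ∈ Γ)
    (hab : ∀ x ∈ segment 𝕜 a b, x -ᵥ p ∉ Ω.direction)
    (hcd : ∀ x ∈ segment 𝕜 c d, x -ᵥ p ∉ Ω.direction) :
    segment 𝕜 a b ∩ segment 𝕜 c d = ∅ ↔
      segment 𝕜 (f a) (f b) ∩ segment 𝕜 (f c) (f d) = ∅ := by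
  obtain ⟨φ, hφp, hφΩ⟩ := exists_affineMap_apply_eq_zero_and_eqOn_one hpΩ
  obtain ⟨ψ, hψp, hψΓ⟩ := exists_affineMap_apply_eq_zero_and_eqOn_one hpΓ
  have hφ_ne : ∀ x ∈ Γ, x -ᵥ p ∉ Ω.direction → φ x ≠ 0 := fun x hx hxp =>
    apply_ne_zero_of_mem_line hφp (hf x hx hxp).2 (hφΩ (hf x hx hxp).1)
  have hf_eq : ∀ x ∈ Γ, x -ᵥ p ∉ Ω.direction → f x = centralProj φ p x := fun x hx hxp =>
    eq_centralProj_of_mem_line hφp (hf x hx hxp).2 (hφΩ (hf x hx hxp).1)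
  have hφab : 0 < φ a * φ b := apply_mul_apply_pos_of_forall_segment_ne_zero fun x hx =>
    hφ_ne x (Γ.convex.segment_subset ha hb hx) (hab x hx)
  have hφcd : 0 < φ c * φ d := apply_mul_apply_pos_of_forall_segment_ne_zero fun x hx =>
    hφ_ne x (Γ.convex.segment_subset hc hd hx) (hcd x hx)
  rw [hf_eq a ha (hab a (left_mem_segment 𝕜 a b)), hf_eq b hb (hab b (right_mem_segment 𝕜 a b)),
    hf_eq c hc (hcd c (left_mem_segment 𝕜 c d)), hf_eq d hd (hcd d (right_mem_segment 𝕜 c d)),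
    ← Set.not_nonempty_iff_eq_empty, ← Set.not_nonempty_iff_eq_empty,
    nonempty_centralProj_segment_inter_iff hψp (hψΓ ha) (hψΓ hb) (hψΓ hc) (hψΓ hd) hφab hφcd]

/-- If the closed segments from `a` to `b` and from `c` to `d` (with `a,b,c,d ∈ Γ`)
contain no vanishing point of `Γ`, then they are disjoint if and only if their images,
the closed segments from `f a` to `f b` and from `f c` to `f d`, are disjoint. -/
theorem centralProj_disjoint_segments
    (Γ Ω : AffineSubspace ℝ E3) (p : E3) (f : E3 → E3)
    (hΓ : IsPlane Γ) (hΩ : IsPlane Ω)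
    (hnp : Γ.direction ≠ Ω.direction)
    (hpΓ : p ∉ Γ) (hpΩ : p ∉ Ω)
    (hf : IsCentralProj Γ Ω p f)
    (a b c d : E3) (ha : a ∈ Γ) (hb : b ∈ Γ) (hc : c ∈ Γ) (hd : d ∈ Γ)
    (hnv₁ : ∀ x ∈ segment ℝ a b, ¬ VanishingPt Γ Ω p x)
    (hnv₂ : ∀ x ∈ segment ℝ c d, ¬ VanishingPt Γ Ω p x) :
    segment ℝ a b ∩ segment ℝ c d = ∅ ↔
      segment ℝ (f a) (f b) ∩ segment ℝ (f c) (f d) = ∅ :=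
  centralProj_disjoint_segments_general hpΓ hpΩ hf ha hb hc hd
    (fun x hx h => hnv₁ x hx ⟨Γ.convex.segment_subset ha hb hx, h⟩)
    (fun x hx h => hnv₂ x hx ⟨Γ.convex.segment_subset hc hd hx, h⟩)
end
end

section
/- Work in ℝ³ with Γ = {(x,y,z) : x = 0} and Ω = {(x,y,z) : z = 0}, fix p = (p₁,p₂,p₃) with p₁ > 0 and p₃ > 0, let f be the central projection from Γ to Ω through p, and let v₀ = (0,p₂,p₃). Let F = (v₀,v₁,…,v_{n−1}) be a convex fan in general position contained in Γ whose kernel convex vertex is v₀ and all of whose other vertices have z-coordinate strictly less than p₃. Then T = (f(v₁),f(v₂),…,f(v_{n−1})) is a terrain in Ω: it is a simple polygonal chain (its edges intersect only at shared endpoints) and it is monotone, its vertices having strictly monotone y-coordinates. -/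
noncomputable section

/-- `f` is the central projection through `p` from the plane `Γ = {x = 0}` to the plane
`Ω = {z = 0}`: every point `a` of `Γ` whose `z`-coordinate differs from that of `p`
(i.e. every non-vanishing point of `Γ`) is sent to the (unique) intersection point of the
line through `p` and `a` with `Ω`. -/
def IsCentralProjC (p : E3) (f : E3 → E3) : Prop :=
  ∀ a : E3, a 0 = 0 → a 2 ≠ p 2 →
    (f a) 2 = 0 ∧ ∃ t : ℝ, f a = p + t • (a - p)

/-- The boundary of the polygon with vertices `w 0, …, w (n-1)` (cyclically): the union
of its edges. -/
def polyBoundary (w : ℕ → E3) (n : ℕ) : Set E3 :=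
  ⋃ i ∈ Finset.range n, segment ℝ (w i) (w ((i + 1) % n))

/-- The closure of the polygon with vertices `w 0, …, w (n-1)` drawn in the plane `P`:
its boundary together with all bounded connected components of the complement (in `P`)
of the boundary, i.e. the bounded region enclosed by the boundary plus the boundary. -/
def polyRegion (P : Set E3) (w : ℕ → E3) (n : ℕ) : Set E3 :=
  polyBoundary w n ∪
    {x ∈ P | x ∉ polyBoundary w n ∧
      Bornology.IsBounded (connectedComponentIn (P \ polyBoundary w n) x)}

/-- `w 0, …, w (n-1)` are the vertices of a simple polygon: they are pairwise distinct
and two distinct (cyclically consecutive) edges intersect exactly at their shared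
endpoints. -/
def IsSimplePolygon (w : ℕ → E3) (n : ℕ) : Prop :=
  3 ≤ n ∧ (∀ i < n, ∀ j < n, w i = w j → i = j) ∧
    ∀ i < n, ∀ j < n, i ≠ j →
      segment ℝ (w i) (w ((i + 1) % n)) ∩ segment ℝ (w j) (w ((j + 1) % n)) =
        ({w i, w ((i + 1) % n)} : Set E3) ∩ ({w j, w ((j + 1) % n)} : Set E3)

/-- The polygon is in general position: no three of its vertices are collinear. -/
def GeneralPosition (w : ℕ → E3) (n : ℕ) : Prop :=
  ∀ i < n, ∀ j < n, ∀ k < n, i ≠ j → j ≠ k → i ≠ k →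
    ¬ Collinear ℝ ({w i, w j, w k} : Set E3)

/-- Vertex `w i` is a convex vertex (interior angle less than `π`): the closure of the
polygon is locally convex at `w i`. -/
def ConvexVertexAt (P : Set E3) (w : ℕ → E3) (n : ℕ) (i : ℕ) : Prop :=
  ∃ U ∈ nhds (w i), Convex ℝ (polyRegion P w n ∩ U)

/-- Vertex `w i` is a kernel vertex: it sees every point of the closure of the polygon,
i.e. for every point `x` of the closure, the segment from `w i` to `x` stays inside the
closure. -/
def IsKernelVertexAt (P : Set E3) (w : ℕ → E3) (n : ℕ) (i : ℕ) : Prop :=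
  ∀ x ∈ polyRegion P w n, segment ℝ (w i) x ⊆ polyRegion P w n

/-- A convex fan with convex kernel vertex `w i`: a simple polygon in the plane `P` whose
vertex `w i` is convex and sees every point of the closure. -/
def IsConvexFanAt (P : Set E3) (w : ℕ → E3) (n : ℕ) (i : ℕ) : Prop :=
  IsSimplePolygon w n ∧ ConvexVertexAt P w n i ∧ IsKernelVertexAt P w n i

/-- `u 0, …, u (m-1)` are the vertices of a simple polygonal chain: they are pairwise
distinct and two distinct (consecutive) edges intersect exactly at their shared
endpoints. -/
def IsSimpleChain (u : ℕ → E3) (m : ℕ) : Prop :=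
  (∀ i < m, ∀ j < m, u i = u j → i = j) ∧
    ∀ i, i + 1 < m → ∀ j, j + 1 < m → i ≠ j →
      segment ℝ (u i) (u (i + 1)) ∩ segment ℝ (u j) (u (j + 1)) =
        ({u i, u (i + 1)} : Set E3) ∩ ({u j, u (j + 1)} : Set E3)

/-!
The projection sends a point of slope `s`, seen from `v₀`, to a point with `y`-coordinate
`p₂ + p₃ s`, so it suffices that the slope is injective along the chain `v₁, …, v_{n-1}`: a
continuous injective function on an interval is strictly monotone.

Let `S t` and `L t` be the slope and the depth below `v₀` of the point of the chain with parameter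
`t`, and let `A` be the set of the parameters of the points farthest from `v₀` in their direction.
Then `S` is injective on `A` and maps `A` onto the whole range of `S`, an interval. The maximal
depth in direction `s` is lower semicontinuous in `s`: where it dropped abruptly, a point visible
from `v₀` would be joined to infinity along a nearby ray, outside the polygon. Hence `A` is
compact, so `S` embeds it onto an interval, and `A` is connected. The same visibility argument
makes the slopes of `v₁` and `v_{n-1}` the two extreme ones; no other point of the chain has these
slopes, so `A` contains both ends of the chain. Thus `A` is the whole parameter interval.
-/

section FiberMax

open Set Filter Topology

variable {α Y β : Type*}

/-- The points of `I` at which `L` is maximal along the fibre of `S` in `I`. For the direction `S`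
and the depth `L` of a point of a curve, as seen from a fixed viewpoint, these are the points of
the curve farthest from the viewpoint in their direction. -/
def fiberMaxOn [LE β] (S : α → Y) (L : α → β) (I : Set α) : Set α :=
  {t ∈ I | ∀ τ ∈ I, S τ = S t → L τ ≤ L t}

theorem fiberMaxOn_subset [LE β] (S : α → Y) (L : α → β) (I : Set α) : fiberMaxOn S L I ⊆ I :=
  sep_subset _ _

theorem mem_fiberMaxOn_of_fiber_unique [Preorder β] {S : α → Y} {L : α → β} {I : Set α} {t : α}
    (ht : t ∈ I) (huniq : ∀ τ ∈ I, S τ = S t → τ = t) : t ∈ fiberMaxOn S L I :=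
  ⟨ht, fun τ hτ h => (congrArg L (huniq τ hτ h)).le⟩

theorem injOn_fiberMaxOn [PartialOrder β] {S : α → Y} {L : α → β} {I : Set α}
    (hinj : InjOn (fun t => (S t, L t)) I) : InjOn S (fiberMaxOn S L I) := fun t ht t' ht' h =>
  hinj ht.1 ht'.1 (Prod.ext h (le_antisymm (ht'.2 t ht.1 h) (ht.2 t' ht'.1 h.symm)))

theorem image_fiberMaxOn [TopologicalSpace α] [TopologicalSpace Y] [T1Space Y] [LinearOrder β]
    [TopologicalSpace β] [ClosedIciTopology β] {S : α → Y} {L : α → β} {I : Set α}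
    (hI : IsCompact I) (hIc : IsClosed I) (hS : ContinuousOn S I) (hL : ContinuousOn L I) :
    S '' fiberMaxOn S L I = S '' I := by
  refine (image_mono (fiberMaxOn_subset S L I)).antisymm ?_
  rintro _ ⟨t, ht, rfl⟩
  have hfiber : IsCompact (I ∩ S ⁻¹' {S t}) :=
    hI.of_isClosed_subset (hS.preimage_isClosed_of_isClosed hIc isClosed_singleton)
      inter_subset_left
  obtain ⟨τ, ⟨hτ, hτt⟩, hmax⟩ :=
    hfiber.exists_isMaxOn ⟨t, ht, rfl⟩ (hL.mono inter_subset_left)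
  exact ⟨τ, ⟨hτ, fun τ' hτ' h => hmax ⟨hτ', h.trans hτt⟩⟩, hτt⟩

-- If a limit `t` of fibre maxima had a point `t'` with larger `L` in its fibre, then lower
-- semicontinuity at `t'` would also provide larger points in the fibres of those maxima.
theorem isClosed_fiberMaxOn [TopologicalSpace α] [TopologicalSpace Y] [LinearOrder β]
    [TopologicalSpace β] [OrderTopology β] [DenselyOrdered β] {S : α → Y} {L : α → β} {I : Set α}
    (hIc : IsClosed I) (hS : ContinuousOn S I) (hL : ContinuousOn L I)
    (hlsc : ∀ t ∈ I, (∀ τ ∈ I, S τ = S t → τ = t) ∨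
      ∀ d < L t, ∀ᶠ s in 𝓝 (S t), ∃ τ ∈ I, S τ = s ∧ d < L τ) :
    IsClosed (fiberMaxOn S L I) := by
  refine isClosed_of_closure_subset fun t ht => ?_
  have htI : t ∈ I := closure_minimal (fiberMaxOn_subset S L I) hIc ht
  refine ⟨htI, fun t' ht' hst => le_of_not_gt fun hlt => ?_⟩
  rcases hlsc t' ht' with huniq | hlsc
  · exact hlt.ne (congrArg L (huniq t htI hst.symm))
  obtain ⟨d, hd, hd'⟩ := exists_between hlt
  have := mem_closure_iff_nhdsWithin_neBot.1 ht
  have hS' : Tendsto S (𝓝[fiberMaxOn S L I] t) (𝓝 (S t')) := by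
    rw [hst]; exact (hS t htI).mono_left (nhdsWithin_mono _ (fiberMaxOn_subset S L I))
  have hL' : Tendsto L (𝓝[fiberMaxOn S L I] t) (𝓝 (L t)) :=
    (hL t htI).mono_left (nhdsWithin_mono _ (fiberMaxOn_subset S L I))
  obtain ⟨τ, ⟨τ', hτ', hS'', hdτ'⟩, hτd, hτ⟩ := ((hS'.eventually (hlsc d hd')).and
    ((hL'.eventually_lt_const hd).and self_mem_nhdsWithin)).exists
  exact (hdτ'.trans_le (hτ.2 τ' hτ' hS'')).not_gt hτd

theorem isPreconnected_of_isCompact_of_injOn [TopologicalSpace α] [TopologicalSpace Y]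
    [T2Space Y] {A : Set α} {S : α → Y} (hA : IsCompact A) (hS : ContinuousOn S A)
    (hinj : InjOn S A) (himage : IsPreconnected (S '' A)) : IsPreconnected A := by
  have : CompactSpace A := isCompact_iff_compactSpace.1 hA
  have hemb : IsClosedEmbedding (A.domRestrict S) :=
    hS.domRestrict.isClosedEmbedding (injOn_iff_injective.1 hinj)
  rw [isPreconnected_iff_preconnectedSpace, preconnectedSpace_iff_univ,
    ← hemb.isInducing.isPreconnected_image, image_univ, range_domRestrict]
  exact himage

theorem injOn_Icc_of_fiberMaxOn [ConditionallyCompleteLinearOrder α] [TopologicalSpace α]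
    [OrderTopology α] [DenselyOrdered α] [TopologicalSpace Y] [T2Space Y] [LinearOrder β]
    [TopologicalSpace β] [OrderTopology β] [DenselyOrdered β] {S : α → Y} {L : α → β} {a b : α}
    (hS : ContinuousOn S (Icc a b)) (hL : ContinuousOn L (Icc a b))
    (hinj : InjOn (fun t => (S t, L t)) (Icc a b))
    (ha : ∀ τ ∈ Icc a b, S τ = S a → τ = a) (hb : ∀ τ ∈ Icc a b, S τ = S b → τ = b)
    (hlsc : ∀ t ∈ Icc a b, S t ≠ S a → S t ≠ S b →
      ∀ d < L t, ∀ᶠ s in 𝓝 (S t), ∃ τ ∈ Icc a b, S τ = s ∧ d < L τ) :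
    InjOn S (Icc a b) := by
  rcases lt_or_ge b a with hab | hab
  · simp [Icc_eq_empty_of_lt hab]
  have hclosed : IsClosed (fiberMaxOn S L (Icc a b)) := by
    refine isClosed_fiberMaxOn isClosed_Icc hS hL fun t ht => ?_
    by_cases hta : S t = S a
    · exact Or.inl fun τ hτ h => (ha τ hτ (h.trans hta)).trans (ha t ht hta).symm
    by_cases htb : S t = S b
    · exact Or.inl fun τ hτ h => (hb τ hτ (h.trans htb)).trans (hb t ht htb).symm
    exact Or.inr (hlsc t ht hta htb)
  have hsub := fiberMaxOn_subset S L (Icc a b)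
  have hpreconn : IsPreconnected (fiberMaxOn S L (Icc a b)) := by
    refine isPreconnected_of_isCompact_of_injOn
      (isCompact_Icc.of_isClosed_subset hclosed hsub) (hS.mono hsub) (injOn_fiberMaxOn hinj) ?_
    rw [image_fiberMaxOn isCompact_Icc isClosed_Icc hS hL]
    exact isPreconnected_Icc.image S hS
  have hall : Icc a b ⊆ fiberMaxOn S L (Icc a b) := hpreconn.ordConnected.out
    (mem_fiberMaxOn_of_fiber_unique (left_mem_Icc.2 hab) ha)
    (mem_fiberMaxOn_of_fiber_unique (right_mem_Icc.2 hab) hb)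
  exact (injOn_fiberMaxOn hinj).mono hall

end FiberMax

section Extrema

open Set Filter Topology

theorem image_notMem_nhds_of_isMaxOn {α β : Type*} [TopologicalSpace β] [LinearOrder β]
    [OrderTopology β] [DenselyOrdered β] [NoMaxOrder β] {f : α → β} {s : Set α} {t : α}
    (h : IsMaxOn f s t) : f '' s ∉ 𝓝 (f t) := by
  intro hnhds
  obtain ⟨_, hlt, τ, hτ, rfl⟩ := Eventually.exists_gt hnhds
  exact hlt.not_ge (h hτ)

theorem isExtrOn_of_image_mem_nhds {α β : Type*} [TopologicalSpace α] [TopologicalSpace β]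
    [LinearOrder β] [OrderTopology β] [DenselyOrdered β] [NoMaxOrder β] [NoMinOrder β]
    {f : α → β} {K : Set α} {a b : α} (hK : IsCompact K) (hf : ContinuousOn f K)
    (ha : a ∈ K) (hb : b ∈ K) (hab : f a ≠ f b)
    (hnhds : ∀ t ∈ K, f t ≠ f a → f t ≠ f b → f '' K ∈ 𝓝 (f t)) :
    IsExtrOn f K a ∧ IsExtrOn f K b := by
  obtain ⟨M, hM, hmax⟩ := hK.exists_isMaxOn ⟨a, ha⟩ hf
  obtain ⟨m, hm, hmin⟩ := hK.exists_isMinOn ⟨a, ha⟩ hf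
  have hM' : f M = f a ∨ f M = f b := by
    by_contra! h
    exact image_notMem_nhds_of_isMaxOn hmax (hnhds M hM h.1 h.2)
  have hm' : f m = f a ∨ f m = f b := by
    by_contra! h
    exact image_notMem_nhds_of_isMaxOn (β := βᵒᵈ) hmin.dual (hnhds m hm h.1 h.2)
  have max_of_eq {c : α} (h : f M = f c) : IsExtrOn f K c :=
    IsMaxOn.isExtr fun τ hτ => (hmax hτ).trans_eq h
  have min_of_eq {c : α} (h : f m = f c) : IsExtrOn f K c :=
    IsMinOn.isExtr fun τ hτ => h.symm.trans_le (hmin hτ)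
  have hmM : f m ≠ f M := fun h =>
    hab (((hmax ha).antisymm (h.symm.trans_le (hmin ha))).trans
      ((hmax hb).antisymm (h.symm.trans_le (hmin hb))).symm)
  rcases hM' with hMa | hMb
  · exact ⟨max_of_eq hMa, min_of_eq (hm'.resolve_left fun h => hmM (h.trans hMa.symm))⟩
  · exact ⟨min_of_eq (hm'.resolve_right fun h => hmM (h.trans hMb.symm)), max_of_eq hMb⟩

theorem eq_endpoint_of_isExtrOn_of_injOn {α β : Type*} [ConditionallyCompleteLinearOrder α]
    [TopologicalSpace α] [OrderTopology α] [DenselyOrdered α] [LinearOrder β] [TopologicalSpace β]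
    [OrderClosedTopology β] {f : α → β} {a b t : α} (hf : ContinuousOn f (Icc a b))
    (hinj : InjOn f (Icc a b)) (ht : t ∈ Icc a b) (hext : IsExtrOn f (Icc a b) t) :
    t = a ∨ t = b := by
  have hab := ht.1.trans ht.2
  have ha := left_mem_Icc.2 hab
  have hb := right_mem_Icc.2 hab
  by_contra! hne
  have hat := ht.1.lt_of_ne' hne.1
  have htb := ht.2.lt_of_ne hne.2
  rcases hf.strictMonoOn_of_injOn_Icc' hab hinj with hmono | hanti
  · exact hext.elim (fun h => (h ha).not_gt (hmono ha ht hat))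
      fun h => (h hb).not_gt (hmono ht hb htb)
  · exact hext.elim (fun h => (h hb).not_gt (hanti ht hb htb))
      fun h => (h ha).not_gt (hanti ha ht hat)

end Extrema

section UnitIntervals

open Set

theorem exists_mem_Icc_natCast {M : ℕ} (hM : 0 < M) {t : ℝ} (ht : t ∈ Icc (0 : ℝ) M) :
    ∃ k < M, t ∈ Icc (k : ℝ) (k + 1) := by
  rcases ht.2.lt_or_eq with hlt | rfl
  · exact ⟨⌊t⌋₊, (Nat.floor_lt ht.1).2 hlt, Nat.floor_le ht.1, (Nat.lt_floor_add_one t).le⟩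
  · refine ⟨M - 1, by omega, ?_⟩
    rw [Nat.cast_pred hM]
    constructor <;> linarith

theorem Icc_natCast_subset {k M : ℕ} (hk : k < M) : Icc (k : ℝ) (k + 1) ⊆ Icc (0 : ℝ) M :=
  Icc_subset_Icc k.cast_nonneg (by exact_mod_cast hk)

theorem finite_fiber_of_injOn_unit_Icc {Y : Type*} {S : ℝ → Y} {M : ℕ} (hM : 0 < M)
    (hinj : ∀ k < M, InjOn S (Icc (k : ℝ) (k + 1))) (s : Y) :
    {t ∈ Icc (0 : ℝ) M | S t = s}.Finite := by
  have hcover : {t ∈ Icc (0 : ℝ) M | S t = s} ⊆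
      ⋃ k ∈ Iio M, {t ∈ Icc (k : ℝ) (k + 1) | S t = s} := by
    rintro t ⟨ht, hs⟩
    obtain ⟨k, hk, htk⟩ := exists_mem_Icc_natCast hM ht
    exact mem_biUnion hk ⟨htk, hs⟩
  refine ((finite_Iio M).biUnion fun k hk => Subsingleton.finite ?_).subset hcover
  exact fun t ht t' ht' => hinj k hk ht.1 ht'.1 (ht.2.trans ht'.2.symm)

theorem eq_natCast_of_isExtrOn {β : Type*} [LinearOrder β] [TopologicalSpace β]
    [OrderClosedTopology β] {S : ℝ → β} {M : ℕ} (hM : 0 < M) (hS : ContinuousOn S (Icc (0 : ℝ) M))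
    (hinj : ∀ k < M, InjOn S (Icc (k : ℝ) (k + 1))) {t : ℝ} (ht : t ∈ Icc (0 : ℝ) M)
    (hext : IsExtrOn S (Icc (0 : ℝ) M) t) : ∃ k ≤ M, t = k := by
  obtain ⟨k, hk, htk⟩ := exists_mem_Icc_natCast hM ht
  have hsub := Icc_natCast_subset hk
  rcases eq_endpoint_of_isExtrOn_of_injOn (hS.mono hsub) (hinj k hk) htk (hext.on_subset hsub)
    with rfl | rfl
  · exact ⟨k, hk.le, rfl⟩
  · exact ⟨k + 1, hk, by push_cast; rfl⟩

theorem eq_natCast_of_isExtrOn_of_eq {β : Type*} [LinearOrder β] [TopologicalSpace β]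
    [OrderClosedTopology β] {S : ℝ → β} {M : ℕ} (hM : 0 < M) (hS : ContinuousOn S (Icc (0 : ℝ) M))
    (hinj : ∀ k < M, InjOn S (Icc (k : ℝ) (k + 1)))
    (hvert : InjOn (fun k : ℕ => S k) (Iic M)) {k : ℕ} (hk : k ≤ M)
    (hext : IsExtrOn S (Icc (0 : ℝ) M) k) : ∀ t ∈ Icc (0 : ℝ) M, S t = S k → t = k := by
  intro t ht hSt
  have hext' : IsExtrOn S (Icc (0 : ℝ) M) t := by
    simpa only [IsExtrOn, IsExtrFilter, IsMinFilter, IsMaxFilter, hSt] using hext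
  obtain ⟨j, hj, rfl⟩ := eq_natCast_of_isExtrOn hM hS hinj ht hext'
  rw [hvert hj hk hSt]

theorem strictMonoOn_or_strictAntiOn_natCast {β : Type*} [LinearOrder β] [TopologicalSpace β]
    [OrderClosedTopology β] {g : ℝ → β} {M : ℕ} (hg : ContinuousOn g (Icc (0 : ℝ) M))
    (hinj : InjOn g (Icc (0 : ℝ) M)) :
    StrictMonoOn (fun k : ℕ => g k) (Iio (M + 1)) ∨
      StrictAntiOn (fun k : ℕ => g k) (Iio (M + 1)) := by
  have hcast : StrictMonoOn (fun k : ℕ => (k : ℝ)) (Iio (M + 1)) :=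
    Nat.strictMono_cast.strictMonoOn _
  have hmaps : MapsTo (fun k : ℕ => (k : ℝ)) (Iio (M + 1)) (Icc (0 : ℝ) M) := fun k hk =>
    ⟨k.cast_nonneg, Nat.cast_le.2 (Nat.le_of_lt_succ hk)⟩
  exact (hg.strictMonoOn_of_injOn_Icc' M.cast_nonneg hinj).imp (·.comp hcast hmaps)
    (·.comp_strictMonoOn hcast hmaps)

end UnitIntervals

section Polyline

open Set

variable {E : Type*} [AddCommGroup E] [Module ℝ E] {u : ℕ → E} {k M : ℕ} {t : ℝ}

/-- The polygonal curve through the points `u 0, u 1, …`, parametrized on `[0, ∞)` so that it runs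
affinely from `u k` to `u (k + 1)` on `[k, k + 1]`. -/
def polyline (u : ℕ → E) (t : ℝ) : E :=
  AffineMap.lineMap (u ⌊t⌋₊) (u (⌊t⌋₊ + 1)) (t - ⌊t⌋₊)

@[simp]
theorem polyline_natCast (u : ℕ → E) (k : ℕ) : polyline u k = u k := by
  simp [polyline]

theorem polyline_of_mem_Icc (u : ℕ → E) (ht : t ∈ Icc (k : ℝ) (k + 1)) :
    polyline u t = AffineMap.lineMap (u k) (u (k + 1)) (t - k) := by
  rcases ht.2.lt_or_eq with hlt | rfl
  · rw [polyline, Nat.floor_eq_on_Ico k t ⟨ht.1, hlt⟩]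
  · simpa using polyline_natCast u (k + 1)

theorem sub_natCast_mem_Icc_zero_one (ht : t ∈ Icc (k : ℝ) (k + 1)) :
    t - k ∈ Icc (0 : ℝ) 1 :=
  ⟨sub_nonneg.2 ht.1, sub_le_iff_le_add'.2 ht.2⟩

theorem image_polyline_Icc_natCast (u : ℕ → E) (k : ℕ) :
    polyline u '' Icc (k : ℝ) (k + 1) = segment ℝ (u k) (u (k + 1)) := by
  rw [segment_eq_image_lineMap, image_congr fun t ht => polyline_of_mem_Icc u ht,
    ← image_image (AffineMap.lineMap (u k) (u (k + 1))) (· - (k : ℝ)), image_sub_const_Icc,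
    sub_self, add_sub_cancel_left]

theorem polyline_mem_segment (u : ℕ → E) (ht : t ∈ Icc (k : ℝ) (k + 1)) :
    polyline u t ∈ segment ℝ (u k) (u (k + 1)) :=
  image_polyline_Icc_natCast u k ▸ mem_image_of_mem _ ht

theorem image_polyline_Icc_zero (u : ℕ → E) (hM : 0 < M) :
    polyline u '' Icc (0 : ℝ) M = ⋃ k, ⋃ (_ : k < M), segment ℝ (u k) (u (k + 1)) := by
  simp_rw [← image_polyline_Icc_natCast, ← image_iUnion]
  congr 1
  refine Subset.antisymm (fun t ht => ?_) (iUnion₂_subset fun k hk => Icc_natCast_subset hk)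
  obtain ⟨k, hk, htk⟩ := exists_mem_Icc_natCast hM ht
  exact mem_biUnion (s := Iio M) hk htk

theorem polyline_mem_of_convex {C : Set E} (hC : Convex ℝ C) (hM : 0 < M)
    (hu : ∀ k ≤ M, u k ∈ C) (ht : t ∈ Icc (0 : ℝ) M) : polyline u t ∈ C := by
  obtain ⟨k, hk, htk⟩ := exists_mem_Icc_natCast hM ht
  exact hC.segment_subset (hu k hk.le) (hu (k + 1) hk) (polyline_mem_segment u htk)

theorem injOn_polyline_Icc_natCast (hk : u k ≠ u (k + 1)) :
    InjOn (polyline u) (Icc (k : ℝ) (k + 1)) := by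
  intro t ht t' ht' h
  rw [polyline_of_mem_Icc u ht, polyline_of_mem_Icc u ht'] at h
  exact sub_left_injective (AffineMap.lineMap_injective ℝ hk h)

theorem continuousOn_polyline [TopologicalSpace E] [IsTopologicalAddGroup E]
    [ContinuousSMul ℝ E] (u : ℕ → E) (M : ℕ) : ContinuousOn (polyline u) (Icc (0 : ℝ) M) := by
  induction M with
  | zero => simp
  | succ M ih =>
    have hedge : ContinuousOn (polyline u) (Icc (M : ℝ) (M + 1)) :=
      (AffineMap.lineMap_continuous.comp (continuous_sub_right (M : ℝ))).continuousOn.congr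
        fun t ht => polyline_of_mem_Icc u ht
    rw [Nat.cast_succ, ← Icc_union_Icc_eq_Icc M.cast_nonneg (le_add_of_nonneg_right zero_le_one)]
    exact ih.union_of_isClosed hedge isClosed_Icc isClosed_Icc

end Polyline

section SimpleChain

open Set

variable {u : ℕ → E3} {m M : ℕ}

theorem eq_left_of_mem_segment_of_le {E : Type*} [AddCommGroup E] [Module ℝ E] (φ : E →ₗ[ℝ] ℝ)
    {a b x : E} (hx : x ∈ segment ℝ a b) (hab : φ a < φ b) (hxa : φ x ≤ φ a) : x = a := by
  rw [segment_eq_image'] at hx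
  obtain ⟨θ, hθ, rfl⟩ := hx
  simp only [map_add, map_smul, map_sub, smul_eq_mul, add_le_iff_nonpos_right] at hxa
  have : θ = 0 := hθ.1.antisymm' (nonpos_of_mul_nonpos_left hxa (sub_pos.2 hab))
  simp [this]

theorem eq_right_of_mem_segment_of_ge {E : Type*} [AddCommGroup E] [Module ℝ E]
    (φ : E →ₗ[ℝ] ℝ) {a b x : E} (hx : x ∈ segment ℝ a b) (hab : φ a < φ b) (hxb : φ b ≤ φ x) :
    x = b :=
  eq_left_of_mem_segment_of_le (-φ) (segment_symm ℝ a b ▸ hx) (neg_lt_neg hab) (neg_le_neg hxb)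

theorem IsSimpleChain.of_strictMonoOn (φ : E3 →ₗ[ℝ] ℝ)
    (hφ : StrictMonoOn (fun i => φ (u i)) (Iio m)) : IsSimpleChain u m := by
  refine ⟨fun i hi j hj h => hφ.injOn hi hj (congrArg φ h), ?_⟩
  have hstep {i : ℕ} (hi : i + 1 < m) : φ (u i) < φ (u (i + 1)) :=
    hφ (mem_Iio.2 (by omega)) hi (Nat.lt_succ_self i)
  have hmeet {i j : ℕ} (hj : j + 1 < m) (hij : i < j) {x : E3}
      (hxi : x ∈ segment ℝ (u i) (u (i + 1))) (hxj : x ∈ segment ℝ (u j) (u (j + 1))) :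
      x = u (i + 1) ∧ x = u j := by
    have hi : i + 1 < m := by omega
    have hle : φ (u (i + 1)) ≤ φ (u j) := hφ.monotoneOn hi (mem_Iio.2 (by omega)) hij
    have hxle : φ x ≤ φ (u (i + 1)) := (convex_halfSpace_le φ.isLinear _).segment_subset
      (hstep hi).le (le_refl (φ (u (i + 1)))) hxi
    have hlex : φ (u j) ≤ φ x := (convex_halfSpace_ge φ.isLinear _).segment_subset
      (le_refl (φ (u j))) (hstep hj).le hxj
    exact ⟨eq_right_of_mem_segment_of_ge φ hxi (hstep hi) (hle.trans hlex),
      eq_left_of_mem_segment_of_le φ hxj (hstep hj) (hxle.trans hle)⟩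
  intro i hi j hj hij
  refine Subset.antisymm ?_ (inter_subset_inter ?_ ?_)
  · rintro x ⟨hxi, hxj⟩
    rcases hij.lt_or_gt with hlt | hlt
    · obtain ⟨h, h'⟩ := hmeet hj hlt hxi hxj
      exact ⟨Or.inr h, Or.inl h'⟩
    · obtain ⟨h, h'⟩ := hmeet hi hlt hxj hxi
      exact ⟨Or.inl h', Or.inr h⟩
  all_goals exact pair_subset (left_mem_segment ℝ _ _) (right_mem_segment ℝ _ _)

theorem IsSimplePolygon.isSimpleChain_tail {w : ℕ → E3} {n : ℕ} (h : IsSimplePolygon w n) :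
    IsSimpleChain (fun i => w (i + 1)) (n - 1) := by
  obtain ⟨-, hinj, hedge⟩ := h
  refine ⟨fun i hi j hj h => ?_, fun i hi j hj hij => ?_⟩
  · exact Nat.succ_injective (hinj (i + 1) (by omega) (j + 1) (by omega) h)
  · have := hedge (i + 1) (by omega) (j + 1) (by omega) (by omega)
    rwa [Nat.mod_eq_of_lt (by omega), Nat.mod_eq_of_lt (by omega)] at this

theorem IsSimpleChain.injOn_polyline (h : IsSimpleChain u (M + 1)) (hM : 0 < M) :
    InjOn (polyline u) (Icc (0 : ℝ) M) := by
  obtain ⟨hinj, hedge⟩ := h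
  have hinj_edge {k : ℕ} (hk : k < M) : InjOn (polyline u) (Icc (k : ℝ) (k + 1)) :=
    injOn_polyline_Icc_natCast fun h =>
      k.succ_ne_self (hinj k (by omega) (k + 1) (by omega) h).symm
  have hvertex {k : ℕ} (hk : k < M) {t : ℝ} (ht : t ∈ Icc (k : ℝ) (k + 1))
      (hmem : polyline u t ∈ ({u k, u (k + 1)} : Set E3)) : ∃ i < M + 1, t = i := by
    rcases hmem with h | h
    · exact ⟨k, by omega, hinj_edge hk ht (by simp) (h.trans (polyline_natCast u k).symm)⟩
    · refine ⟨k + 1, by omega, hinj_edge hk ht (by simp) ?_⟩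
      exact h.trans (polyline_natCast u (k + 1)).symm
  intro t ht t' ht' h
  obtain ⟨k, hk, htk⟩ := exists_mem_Icc_natCast hM ht
  obtain ⟨l, hl, htl⟩ := exists_mem_Icc_natCast hM ht'
  by_cases hkl : k = l
  · subst hkl
    exact hinj_edge hk htk htl h
  have hmem : polyline u t ∈ segment ℝ (u k) (u (k + 1)) ∩ segment ℝ (u l) (u (l + 1)) :=
    ⟨polyline_mem_segment u htk, h ▸ polyline_mem_segment u htl⟩
  rw [hedge k (by omega) l (by omega) hkl] at hmem
  obtain ⟨i, hi, rfl⟩ := hvertex hk htk hmem.1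
  obtain ⟨j, hj, rfl⟩ := hvertex hl htl (h ▸ hmem.2)
  simp only [polyline_natCast] at h
  rw [hinj i hi j hj h]

end SimpleChain

section Rays

open Set Filter Topology

variable {p a b : E3} {s d : ℝ}

/-- The vanishing point of the plane `x = 0` under the central projection through `p` to `z = 0`:
the orthogonal projection of `p` onto the plane `x = 0`. -/
def vanishingPoint (p : E3) : E3 := ![0, p 1, p 2]

/-- The part of the plane `x = 0` strictly below the vanishing point of `p`. -/
def lowerHalfPlane (p : E3) : Set E3 := {a | a 0 = 0 ∧ a 2 < p 2}

/-- How far `a` lies below `p`, as a difference of `z`-coordinates. -/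
def depth (p a : E3) : ℝ := p 2 - a 2

/-- The direction of the ray from the vanishing point of `p` to `a`, as the increase of `y` per
unit of depth. On the line `a 2 = p 2`, where the direction is infinite, the value is `0`. -/
def raySlope (p a : E3) : ℝ := (a 1 - p 1) / depth p a

/-- The point at depth `d` on the ray of slope `s` issuing from the vanishing point of `p`. -/
def rayPoint (p : E3) (s d : ℝ) : E3 := ![0, p 1 + s * d, p 2 - d]

theorem depth_pos (ha : a ∈ lowerHalfPlane p) : 0 < depth p a := sub_pos.2 ha.2

theorem convex_lowerHalfPlane (p : E3) : Convex ℝ (lowerHalfPlane p) :=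
  (convex_hyperplane (LinearMap.proj (R := ℝ) (φ := fun _ : Fin 3 => ℝ) 0).isLinear 0).inter
    (convex_halfSpace_lt (LinearMap.proj (R := ℝ) (φ := fun _ : Fin 3 => ℝ) 2).isLinear (p 2))

@[simp]
theorem depth_rayPoint (p : E3) (s d : ℝ) : depth p (rayPoint p s d) = d := by
  simp [depth, rayPoint]

theorem raySlope_rayPoint (p : E3) (s : ℝ) (hd : d ≠ 0) : raySlope p (rayPoint p s d) = s := by
  rw [raySlope, depth_rayPoint]
  simp [rayPoint, hd]

theorem rayPoint_raySlope_depth (ha : a ∈ lowerHalfPlane p) :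
    rayPoint p (raySlope p a) (depth p a) = a := by
  rw [rayPoint, raySlope, div_mul_cancel₀ _ (depth_pos ha).ne']
  ext i
  fin_cases i <;> simp [depth, ha.1]

theorem continuous_rayPoint (p : E3) : Continuous fun q : ℝ × ℝ => rayPoint p q.1 q.2 := by
  unfold rayPoint
  fun_prop

theorem continuous_depth (p : E3) : Continuous (depth p) :=
  continuous_const.sub (continuous_apply 2)

theorem continuousOn_raySlope (p : E3) : ContinuousOn (raySlope p) (lowerHalfPlane p) :=
  ((continuous_apply 1).sub continuous_const).continuousOn.div (continuous_depth p).continuousOn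
    fun _ ha => (depth_pos ha).ne'

theorem lineMap_vanishingPoint_rayPoint (p : E3) (s d θ : ℝ) :
    AffineMap.lineMap (vanishingPoint p) (rayPoint p s d) θ = rayPoint p s (θ * d) := by
  ext i
  fin_cases i <;> simp [AffineMap.lineMap_apply, vanishingPoint, rayPoint] <;> ring

theorem segment_vanishingPoint_eq_image (ha : a ∈ lowerHalfPlane p) :
    segment ℝ (vanishingPoint p) a = rayPoint p (raySlope p a) '' Icc 0 (depth p a) := by
  have hIcc : Icc 0 (depth p a) = (· * depth p a) '' Icc 0 1 := by
    rw [image_mul_right_Icc zero_le_one (depth_pos ha).le, zero_mul, one_mul]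
  conv_lhs => rw [← rayPoint_raySlope_depth ha]
  rw [segment_eq_image_lineMap, hIcc, image_image]
  simp_rw [lineMap_vanishingPoint_rayPoint]

theorem raySlope_eq_of_rayPoint_mem_segment (ha : a ∈ lowerHalfPlane p) (hd : d ≠ 0)
    (hmem : rayPoint p s d ∈ segment ℝ (vanishingPoint p) a) : raySlope p a = s := by
  rw [segment_vanishingPoint_eq_image ha] at hmem
  obtain ⟨d', -, h⟩ := hmem
  have hdd' : d' = d := by simpa using congrArg (depth p) h
  rw [← raySlope_rayPoint p s hd, ← h, hdd', raySlope_rayPoint p _ hd]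

theorem collinear_of_raySlope_eq (ha : a ∈ lowerHalfPlane p) (hb : b ∈ lowerHalfPlane p)
    (hab : raySlope p a = raySlope p b) : Collinear ℝ {vanishingPoint p, a, b} := by
  rw [collinear_iff_of_mem (p₀ := vanishingPoint p) (by simp)]
  have hray (d : ℝ) : rayPoint p (raySlope p a) d =
      d • ![0, raySlope p a, -1] +ᵥ vanishingPoint p := by
    ext i
    fin_cases i <;> simp [rayPoint, vanishingPoint] <;> ring
  refine ⟨![0, raySlope p a, -1], ?_⟩
  rintro _ (rfl | rfl | rfl)
  · exact ⟨0, by simp⟩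
  · exact ⟨_, (rayPoint_raySlope_depth ha).symm.trans (hray _)⟩
  · exact ⟨_, (rayPoint_raySlope_depth hb).symm.trans (by rw [← hab]; exact hray _)⟩

theorem injOn_raySlope_lineMap (ha : a ∈ lowerHalfPlane p) (hb : b ∈ lowerHalfPlane p)
    (hab : raySlope p a ≠ raySlope p b) :
    InjOn (fun θ : ℝ => raySlope p (AffineMap.lineMap a b θ)) (Icc 0 1) := by
  intro θ hθ η hη h
  have hmem {r : ℝ} (hr : r ∈ Icc (0 : ℝ) 1) : AffineMap.lineMap a b r ∈ lowerHalfPlane p :=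
    (convex_lowerHalfPlane p).lineMap_mem ha hb hr
  have hdet (v w : E3) (hv : v ∈ lowerHalfPlane p) (hw : w ∈ lowerHalfPlane p) :
      raySlope p v = raySlope p w ↔ (v 1 - p 1) * depth p w - (w 1 - p 1) * depth p v = 0 := by
    rw [raySlope, raySlope, div_eq_div_iff (depth_pos hv).ne' (depth_pos hw).ne', sub_eq_zero]
  rw [Ne, hdet a b ha hb] at hab
  rw [hdet _ _ (hmem hθ) (hmem hη)] at h
  have hzero : (η - θ) * ((a 1 - p 1) * depth p b - (b 1 - p 1) * depth p a) = 0 := by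
    simp only [depth, AffineMap.lineMap_apply, vsub_eq_sub, vadd_eq_add, Pi.add_apply,
      Pi.smul_apply, Pi.sub_apply, smul_eq_mul] at h ⊢
    linear_combination h
  exact (sub_eq_zero.1 ((mul_eq_zero.1 hzero).resolve_right hab)).symm

theorem not_isBounded_connectedComponentIn_of_ray {B : Set E3}
    (hB : ∀ d' ≥ d, rayPoint p s d' ∉ B) :
    ¬ Bornology.IsBounded (connectedComponentIn ({v | v 0 = 0} \ B) (rayPoint p s d)) := by
  intro hbdd
  have hray : rayPoint p s '' Ici d ⊆
      connectedComponentIn ({v | v 0 = 0} \ B) (rayPoint p s d) := by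
    refine IsPreconnected.subset_connectedComponentIn ?_ (mem_image_of_mem _ self_mem_Ici) ?_
    · exact isPreconnected_Ici.image _
        ((continuous_rayPoint p).comp (Continuous.prodMk_right s)).continuousOn
    · rintro _ ⟨d', hd', rfl⟩
      exact ⟨rfl, hB d' hd'⟩
  obtain ⟨c, hc⟩ := (hbdd.image_eval 2).bddBelow
  have hle (d' : ℝ) (hd' : d ≤ d') : c ≤ p 2 - d' :=
    hc (mem_image_of_mem (Function.eval 2) (hray (mem_image_of_mem _ hd')))
  have := hle (max d (p 2 - c + 1)) (le_max_left _ _)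
  have := le_max_right d (p 2 - c + 1)
  linarith

theorem not_isBounded_connectedComponentIn_of_frequently_ray {B : Set E3} (hBc : IsClosed B)
    (hs : rayPoint p s d ∉ B) (hB : ∃ᶠ s' in 𝓝 s, ∀ d' ≥ d, rayPoint p s' d' ∉ B) :
    ¬ Bornology.IsBounded (connectedComponentIn ({v | v 0 = 0} \ B) (rayPoint p s d)) := by
  have hcont : Continuous fun s' => rayPoint p s' d :=
    (continuous_rayPoint p).comp (Continuous.prodMk_left d)
  obtain ⟨ε, hε, hball⟩ := Metric.mem_nhds_iff.1 (hcont.continuousAt (hBc.isOpen_compl.mem_nhds hs))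
  obtain ⟨s', hs', hss'⟩ := (hB.and_eventually (Metric.ball_mem_nhds s hε)).exists
  have hsub : (fun s' => rayPoint p s' d) '' Metric.ball s ε ⊆
      connectedComponentIn ({v | v 0 = 0} \ B) (rayPoint p s d) := by
    refine IsPreconnected.subset_connectedComponentIn ?_
      (mem_image_of_mem _ (Metric.mem_ball_self hε)) ?_
    · exact (convex_ball s ε).isPreconnected.image _ hcont.continuousOn
    · rintro _ ⟨r, hr, rfl⟩
      exact ⟨rfl, hball hr⟩
  rw [connectedComponentIn_eq (hsub (mem_image_of_mem _ hss'))]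
  exact not_isBounded_connectedComponentIn_of_ray hs'

end Rays

section Chain

open Set

variable {p : E3} {u : ℕ → E3} {M : ℕ}

theorem mapsTo_polyline_lowerHalfPlane (hM : 0 < M) (hu : ∀ k ≤ M, u k ∈ lowerHalfPlane p) :
    MapsTo (polyline u) (Icc (0 : ℝ) M) (lowerHalfPlane p) := fun _ ht =>
  polyline_mem_of_convex (convex_lowerHalfPlane p) hM hu ht

theorem continuousOn_raySlope_polyline (hM : 0 < M) (hu : ∀ k ≤ M, u k ∈ lowerHalfPlane p) :
    ContinuousOn (fun t => raySlope p (polyline u t)) (Icc (0 : ℝ) M) :=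
  (continuousOn_raySlope p).comp (continuousOn_polyline u M) (mapsTo_polyline_lowerHalfPlane hM hu)

theorem injOn_raySlope_polyline_Icc_natCast (hu : ∀ k ≤ M, u k ∈ lowerHalfPlane p)
    (hslope : InjOn (fun k => raySlope p (u k)) (Iic M)) :
    ∀ k < M, InjOn (fun t => raySlope p (polyline u t)) (Icc (k : ℝ) (k + 1)) := by
  intro k hk t ht t' ht' h
  have hne : raySlope p (u k) ≠ raySlope p (u (k + 1)) := fun h =>
    k.succ_ne_self (hslope hk.le (Nat.succ_le_of_lt hk) h).symm
  simp only [polyline_of_mem_Icc u ht, polyline_of_mem_Icc u ht'] at h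
  exact sub_left_injective (injOn_raySlope_lineMap (hu k hk.le) (hu (k + 1) hk) hne
    (sub_natCast_mem_Icc_zero_one ht) (sub_natCast_mem_Icc_zero_one ht') h)

theorem injOn_raySlope_depth (p : E3) :
    InjOn (fun a => (raySlope p a, depth p a)) (lowerHalfPlane p) :=
  LeftInvOn.injOn (f₁' := fun q : ℝ × ℝ => rayPoint p q.1 q.2) fun _ ha =>
    rayPoint_raySlope_depth ha

end Chain

section Fan

open Set Filter Topology

variable {p : E3} {w : ℕ → E3} {M : ℕ} {s t d : ℝ}

theorem isClosed_polyBoundary (w : ℕ → E3) (n : ℕ) : IsClosed (polyBoundary w n) := by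
  refine (Finset.range n).finite_toSet.isClosed_biUnion fun i _ => ?_
  rw [segment_eq_image_lineMap]
  exact (isCompact_Icc.image AffineMap.lineMap_continuous).isClosed

/-- The part of the boundary of a polygon `w` complementary to the two edges at `w 0`: the
polygonal curve through `w 1, w 2, …`, parametrized by `polyline`. -/
abbrev oppositeChain (w : ℕ → E3) : ℝ → E3 := polyline fun i => w (i + 1)

theorem oppositeChain_natCast (w : ℕ → E3) (k : ℕ) : oppositeChain w k = w (k + 1) :=
  polyline_natCast _ k

theorem oppositeChain_zero (w : ℕ → E3) : oppositeChain w 0 = w 1 := by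
  simpa using oppositeChain_natCast w 0

theorem polyBoundary_eq (w : ℕ → E3) (hM : 0 < M) :
    polyBoundary w (M + 2) = segment ℝ (w 0) (w 1) ∪
      (oppositeChain w '' Icc (0 : ℝ) M ∪ segment ℝ (w 0) (w (M + 1))) := by
  have hmod {k : ℕ} (hk : k < M) : (k + 1 + 1) % (M + 2) = k + 1 + 1 :=
    Nat.mod_eq_of_lt (by omega)
  rw [image_polyline_Icc_zero _ hM]
  simp only [polyBoundary, Finset.mem_range]
  rw [biUnion_lt_succ', biUnion_lt_succ, Nat.mod_self, segment_symm ℝ (w (M + 1)),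
    Nat.mod_eq_of_lt (by omega : 0 + 1 < M + 2)]
  rw [iUnion₂_congr fun k hk => by rw [hmod hk]]

theorem exists_of_rayPoint_mem_polyBoundary (hM : 0 < M) (hw0 : w 0 = vanishingPoint p)
    (hw : ∀ k ≤ M, w (k + 1) ∈ lowerHalfPlane p) (hd : d ≠ 0) (hs1 : s ≠ raySlope p (w 1))
    (hsM : s ≠ raySlope p (w (M + 1))) (hmem : rayPoint p s d ∈ polyBoundary w (M + 2)) :
    ∃ t ∈ Icc (0 : ℝ) M, raySlope p (oppositeChain w t) = s ∧
      depth p (oppositeChain w t) = d := by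
  rw [polyBoundary_eq w hM, hw0] at hmem
  rcases hmem with h | ⟨t, ht, h⟩ | h
  · exact absurd (raySlope_eq_of_rayPoint_mem_segment (hw 0 hM.le) hd h).symm hs1
  · exact ⟨t, ht, by rw [h, raySlope_rayPoint p s hd], by rw [h, depth_rayPoint]⟩
  · exact absurd (raySlope_eq_of_rayPoint_mem_segment (hw M le_rfl) hd h).symm hsM

theorem oppositeChain_mem_polyBoundary (hM : 0 < M) (ht : t ∈ Icc (0 : ℝ) M) :
    oppositeChain w t ∈ polyBoundary w (M + 2) := by
  rw [polyBoundary_eq w hM]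
  exact Or.inr (Or.inl (mem_image_of_mem _ ht))

theorem rayPoint_mem_polyRegion {P : Set E3} {n : ℕ} {a : E3} (hw0 : w 0 = vanishingPoint p)
    (hker : IsKernelVertexAt P w n 0) (ha : a ∈ lowerHalfPlane p) (haw : a ∈ polyBoundary w n)
    (hd : d ∈ Icc 0 (depth p a)) : rayPoint p (raySlope p a) d ∈ polyRegion P w n := by
  refine hker a (Or.inl haw) ?_
  rw [hw0, segment_vanishingPoint_eq_image ha]
  exact mem_image_of_mem _ hd

theorem exists_rayPoint_notMem_polyBoundary (hM : 0 < M) (hw0 : w 0 = vanishingPoint p)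
    (hw : ∀ k ≤ M, w (k + 1) ∈ lowerHalfPlane p)
    (hslope : InjOn (fun k => raySlope p (w (k + 1))) (Iic M))
    (hs1 : s ≠ raySlope p (w 1)) (hsM : s ≠ raySlope p (w (M + 1)))
    {d₁ d₂ : ℝ} (hd₁ : 0 ≤ d₁) (hd : d₁ < d₂) :
    ∃ d ∈ Ioo d₁ d₂, rayPoint p s d ∉ polyBoundary w (M + 2) := by
  have hfinite := (finite_fiber_of_injOn_unit_Icc hM
    (injOn_raySlope_polyline_Icc_natCast hw hslope) s).image fun t => depth p (oppositeChain w t)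
  obtain ⟨d, hdmem, hdfiber⟩ := ((Ioo_infinite hd).sdiff hfinite).nonempty
  refine ⟨d, hdmem, fun hmem => hdfiber ?_⟩
  obtain ⟨t, ht, hts, htd⟩ := exists_of_rayPoint_mem_polyBoundary hM hw0 hw
    (hd₁.trans_lt hdmem.1).ne' hs1 hsM hmem
  exact ⟨t, ⟨ht, hts⟩, htd⟩

-- Otherwise some rays of slope arbitrarily close to that of `oppositeChain w t` would stay outside
-- the polygon beyond depth `d`, and would connect a point visible from `w 0` to infinity.
theorem eventually_exists_lt_depth (hM : 0 < M) (hw0 : w 0 = vanishingPoint p)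
    (hw : ∀ k ≤ M, w (k + 1) ∈ lowerHalfPlane p)
    (hslope : InjOn (fun k => raySlope p (w (k + 1))) (Iic M))
    (hker : IsKernelVertexAt {v | v 0 = 0} w (M + 2) 0) (ht : t ∈ Icc (0 : ℝ) M)
    (ht1 : raySlope p (oppositeChain w t) ≠ raySlope p (w 1))
    (htM : raySlope p (oppositeChain w t) ≠ raySlope p (w (M + 1)))
    (hd : d < depth p (oppositeChain w t)) :
    ∀ᶠ s in 𝓝 (raySlope p (oppositeChain w t)),
      ∃ τ ∈ Icc (0 : ℝ) M, raySlope p (oppositeChain w τ) = s ∧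
        d < depth p (oppositeChain w τ) := by
  have hmem := mapsTo_polyline_lowerHalfPlane hM hw ht
  obtain ⟨d', hd', hnotMem⟩ := exists_rayPoint_notMem_polyBoundary hM hw0 hw hslope ht1 htM
    (le_max_right d 0) (max_lt hd (depth_pos hmem))
  have hdd' : d < d' := (le_max_left d 0).trans_lt hd'.1
  have hd'pos : 0 < d' := (le_max_right d 0).trans_lt hd'.1
  by_contra hfreq
  refine not_isBounded_connectedComponentIn_of_frequently_ray (isClosed_polyBoundary w (M + 2))
    hnotMem ?_ ?_
  · refine ((not_eventually.1 hfreq).and_eventually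
      ((eventually_ne_nhds ht1).and (eventually_ne_nhds htM))).mono ?_
    rintro s ⟨hs, hs1, hsM⟩ d'' hd'' hsmem
    obtain ⟨τ, hτ, hτs, hτd⟩ := exists_of_rayPoint_mem_polyBoundary hM hw0 hw
      (hd'pos.trans_le hd'').ne' hs1 hsM hsmem
    exact hs ⟨τ, hτ, hτs, hτd ▸ hdd'.trans_le hd''⟩
  · exact ((rayPoint_mem_polyRegion hw0 hker hmem (oppositeChain_mem_polyBoundary hM ht)
      ⟨hd'pos.le, hd'.2.le⟩).resolve_left hnotMem).2.2

theorem isExtrOn_raySlope_oppositeChain (hM : 0 < M) (hw0 : w 0 = vanishingPoint p)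
    (hw : ∀ k ≤ M, w (k + 1) ∈ lowerHalfPlane p)
    (hslope : InjOn (fun k => raySlope p (w (k + 1))) (Iic M))
    (hker : IsKernelVertexAt {v | v 0 = 0} w (M + 2) 0) :
    IsExtrOn (fun t => raySlope p (oppositeChain w t)) (Icc (0 : ℝ) M) 0 ∧
      IsExtrOn (fun t => raySlope p (oppositeChain w t)) (Icc (0 : ℝ) M) M := by
  refine isExtrOn_of_image_mem_nhds isCompact_Icc (continuousOn_raySlope_polyline hM hw)
    (left_mem_Icc.2 M.cast_nonneg) (right_mem_Icc.2 M.cast_nonneg) ?_ ?_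
  · rw [oppositeChain_zero, oppositeChain_natCast]
    exact fun h => hM.ne (hslope M.zero_le self_mem_Iic h)
  · intro t ht ht1 htM
    rw [oppositeChain_zero] at ht1
    rw [oppositeChain_natCast] at htM
    filter_upwards [eventually_exists_lt_depth hM hw0 hw hslope hker ht ht1 htM (sub_one_lt _)]
    rintro s ⟨τ, hτ, hτs, -⟩
    exact ⟨τ, hτ, hτs⟩

theorem injOn_raySlope_oppositeChain (hM : 0 < M) (hw0 : w 0 = vanishingPoint p)
    (hw : ∀ k ≤ M, w (k + 1) ∈ lowerHalfPlane p)
    (hslope : InjOn (fun k => raySlope p (w (k + 1))) (Iic M))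
    (hpoly : IsSimplePolygon w (M + 2)) (hker : IsKernelVertexAt {v | v 0 = 0} w (M + 2) 0) :
    InjOn (fun t => raySlope p (oppositeChain w t)) (Icc (0 : ℝ) M) := by
  have hcont := continuousOn_raySlope_polyline hM hw
  obtain ⟨hext0, hextM⟩ := isExtrOn_raySlope_oppositeChain hM hw0 hw hslope hker
  have hunique {k : ℕ} := eq_natCast_of_isExtrOn_of_eq hM hcont (k := k)
    (injOn_raySlope_polyline_Icc_natCast hw hslope) (by simpa only [polyline_natCast])
  refine injOn_Icc_of_fiberMaxOn hcont
    ((continuous_depth p).comp_continuousOn (continuousOn_polyline _ M))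
    ((injOn_raySlope_depth p).comp (hpoly.isSimpleChain_tail.injOn_polyline hM)
      (mapsTo_polyline_lowerHalfPlane hM hw))
    (by simpa using hunique M.zero_le (by simpa using hext0)) (hunique le_rfl hextM) ?_
  intro t ht ht1 htM d hd
  rw [oppositeChain_zero] at ht1
  rw [oppositeChain_natCast] at htM
  exact eventually_exists_lt_depth hM hw0 hw hslope hker ht ht1 htM hd

theorem injOn_raySlope_of_not_collinear (hw0 : w 0 = vanishingPoint p)
    (hw : ∀ k ≤ M, w (k + 1) ∈ lowerHalfPlane p)
    (hcol : ∀ i ≤ M, ∀ j ≤ M, i ≠ j → ¬ Collinear ℝ {w 0, w (i + 1), w (j + 1)}) :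
    InjOn (fun k => raySlope p (w (k + 1))) (Iic M) := by
  intro i hi j hj h
  by_contra hij
  refine hcol i hi j hj hij ?_
  rw [hw0]
  exact collinear_of_raySlope_eq (hw i hi) (hw j hj) h

end Fan

section Projection

open Set

theorem IsCentralProjC.apply_one {p : E3} {f : E3 → E3} (hf : IsCentralProjC p f) {a : E3}
    (ha : a ∈ lowerHalfPlane p) : f a 1 = p 1 + p 2 * raySlope p a := by
  obtain ⟨hz, t, ht⟩ := hf a ha.1 ha.2.ne
  have hdepth : depth p a ≠ 0 := (depth_pos ha).ne'
  rw [ht] at hz ⊢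
  simp only [Pi.add_apply, Pi.smul_apply, Pi.sub_apply, smul_eq_mul] at hz ⊢
  have htd : t * depth p a = p 2 := by rw [depth]; linear_combination -hz
  rw [raySlope, ← htd]
  field_simp

theorem IsCentralProjC.strictMonoOn_or_strictAntiOn {p : E3} {f : E3 → E3}
    (hf : IsCentralProjC p f) (hp : p 2 ≠ 0) {u : ℕ → E3} {M : ℕ} (hM : 0 < M)
    (hu : ∀ k ≤ M, u k ∈ lowerHalfPlane p)
    (hinj : InjOn (fun t => raySlope p (polyline u t)) (Icc (0 : ℝ) M)) :
    StrictMonoOn (fun k => f (u k) 1) (Iio (M + 1)) ∨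
      StrictAntiOn (fun k => f (u k) 1) (Iio (M + 1)) := by
  have hcont : ContinuousOn (fun t => p 1 + p 2 * raySlope p (polyline u t)) (Icc (0 : ℝ) M) :=
    continuousOn_const.add (continuousOn_const.mul (continuousOn_raySlope_polyline hM hu))
  have hinj' : InjOn (fun t => p 1 + p 2 * raySlope p (polyline u t)) (Icc (0 : ℝ) M) :=
    fun t ht t' ht' h => hinj ht ht' (mul_left_cancel₀ hp (add_left_cancel h))
  have hvertex : EqOn (fun k : ℕ => p 1 + p 2 * raySlope p (polyline u k))
      (fun k => f (u k) 1) (Iio (M + 1)) := fun k hk => by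
    simp only [polyline_natCast, hf.apply_one (hu k (Nat.le_of_lt_succ hk))]
  exact (strictMonoOn_or_strictAntiOn_natCast hcont hinj').imp (·.congr hvertex) (·.congr hvertex)

theorem IsSimpleChain.of_strictMonoOn_or_strictAntiOn {u : ℕ → E3} {m : ℕ} (φ : E3 →ₗ[ℝ] ℝ)
    (hφ : StrictMonoOn (fun i => φ (u i)) (Iio m) ∨ StrictAntiOn (fun i => φ (u i)) (Iio m)) :
    IsSimpleChain u m :=
  hφ.elim (.of_strictMonoOn φ) fun h => .of_strictMonoOn (-φ) h.neg

end Projection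

theorem terrain_from_convex_fan_general
    (p : E3) (hp : p 2 ≠ 0)
    (f : E3 → E3) (hf : IsCentralProjC p f)
    (n : ℕ) (w : ℕ → E3)
    (hw0 : w 0 = ![0, p 1, p 2])
    (hwΓ : ∀ i < n, w i 0 = 0)
    (hbelow : ∀ i, 0 < i → i < n → w i 2 < p 2)
    (hpoly : IsSimplePolygon w n)
    (hker : IsKernelVertexAt {v : E3 | v 0 = 0} w n 0)
    (hcol : ∀ i < n, ∀ j < n, 0 < i → 0 < j → i ≠ j →
      ¬ Collinear ℝ ({w 0, w i, w j} : Set E3)) :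
    IsSimpleChain (fun i => f (w (i + 1))) (n - 1) ∧
      (StrictMonoOn (fun i : ℕ => f (w (i + 1)) 1) (Set.Iio (n - 1)) ∨
        StrictAntiOn (fun i : ℕ => f (w (i + 1)) 1) (Set.Iio (n - 1))) := by
  obtain ⟨M, hM, rfl⟩ : ∃ M, 0 < M ∧ n = M + 2 := ⟨n - 2, by grind [hpoly.1], by grind [hpoly.1]⟩
  have hw : ∀ k ≤ M, w (k + 1) ∈ lowerHalfPlane p := fun k hk =>
    ⟨hwΓ (k + 1) (by omega), hbelow (k + 1) k.succ_pos (by omega)⟩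
  have hslope : Set.InjOn (fun k => raySlope p (w (k + 1))) (Set.Iic M) :=
    injOn_raySlope_of_not_collinear hw0 hw fun i hi j hj hij =>
      hcol (i + 1) (by omega) (j + 1) (by omega) i.succ_pos j.succ_pos (by omega)
  have hinj := injOn_raySlope_oppositeChain hM hw0 hw hslope hpoly hker
  have hmono := hf.strictMonoOn_or_strictAntiOn hp hM hw hinj
  exact ⟨.of_strictMonoOn_or_strictAntiOn (LinearMap.proj 1) hmono, hmono⟩

/-- Let `F = (v₀, v₁, …, v_{n-1})` be a convex fan in general position drawn in the plane
`Γ = {x = 0}` with convex kernel vertex `v₀ = (0, p₂, p₃)`, all other vertices having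
`z`-coordinate less than `p₃`. Then `T = (f v₁, …, f v_{n-1})` is a terrain in
`Ω = {z = 0}`: a simple polygonal chain whose vertices have strictly monotone
`y`-coordinates. -/
theorem terrain_from_convex_fan
    (p : E3) (hp1 : 0 < p 0) (hp3 : 0 < p 2)
    (f : E3 → E3) (hf : IsCentralProjC p f)
    (n : ℕ) (w : ℕ → E3)
    (hw0 : w 0 = ![0, p 1, p 2])
    (hwΓ : ∀ i < n, w i 0 = 0)
    (hbelow : ∀ i, 0 < i → i < n → w i 2 < p 2)
    (hfan : IsConvexFanAt {v : E3 | v 0 = 0} w n 0)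
    (hgp : GeneralPosition w n) :
    IsSimpleChain (fun i => f (w (i + 1))) (n - 1) ∧
      (StrictMonoOn (fun i : ℕ => f (w (i + 1)) 1) (Set.Iio (n - 1)) ∨
        StrictAntiOn (fun i : ℕ => f (w (i + 1)) 1) (Set.Iio (n - 1))) :=
  terrain_from_convex_fan_general p hp3.ne' f hf n w hw0 hwΓ hbelow hfan.1 hfan.2.2
    fun i hi j hj hi0 hj0 hij => hgp 0 (by omega) i hi j hj hi0.ne hij hj0.ne
end
end
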